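/- Fix a ∈ ℤ and set a* = |a|+1 if |a| ≤ 1 and a* = |a| if |a| ≥ 2. For all f ∈ Ḣ^{a*−1}_⋄ and B > 0 there exists C = C(ν, T, ‖f‖_{Ḣ^{a*−1}}, a, B) > 0 such that for all θ ∈ Ḣ^{a*}_⋄ with ‖θ‖_{Ḣ^{a*}} ≤ B and all ξ ∈ Ḣ^a_⋄, the linearization of the Navier–Stokes flow satisfies the stability estimate ‖ξ‖²_{Ḣ^a} ≤ C ∫₀ᵀ ‖𝕀_θ[ξ](t)‖²_{Ḣ^{a+1}} dt. -/

import Mathlib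

open MeasureTheory Set
open scoped BigOperators

noncomputable section

namespace NS2D

/-- Nonzero Fourier frequencies of the 2D torus `Ω = 𝕋²`. -/
def Freq : Type := {k : ℤ × ℤ // k ≠ 0}

/-- Squared Euclidean modulus `|k|²` of a frequency. -/
def knormSq (k : Freq) : ℝ := (k.1.1 : ℝ) ^ 2 + (k.1.2 : ℝ) ^ 2

/-- Eigenvalue `λ_k = 4π²|k|²` of the periodic Laplacian `−Δ`. -/
def lam (k : Freq) : ℝ := 4 * Real.pi ^ 2 * knormSq k

/-- A divergence-free mean-zero vector field `u ∈ Ḣ_⋄` (or, more generally, an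
element of the scale `Ḣ^α_⋄`) on the torus is represented by its Fourier
coefficients `c k` along the orthonormal basis
`e_k(x) = |k|⁻¹ (k₂, −k₁) exp(2πi k·x)` of divergence-free fields. -/
abbrev Coef : Type := Freq → ℂ

/-- Negation of a frequency. -/
def fneg (k : Freq) : Freq := ⟨-k.1, neg_ne_zero.mpr k.2⟩

/-- The conjugacy condition expressing that the coefficients `c` represent a
real-valued vector field (note `e_{−k} = − conj e_k`). -/
def IsReal (c : Coef) : Prop := ∀ k, c (fneg k) = - (starRingEnd ℂ) (c k)

/-- Squared homogeneous Sobolev norm `‖·‖²_{Ḣ^α} = Σ_k λ_k^α |c k|²`. -/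
def hSq (α : ℝ) (c : Coef) : ℝ := ∑' k, lam k ^ α * ‖c k‖ ^ 2

/-- Homogeneous Sobolev norm `‖·‖_{Ḣ^α}`. -/
def hN (α : ℝ) (c : Coef) : ℝ := Real.sqrt (hSq α c)

/-- Finiteness of the `Ḣ^α`-norm. -/
def FinH (α : ℝ) (c : Coef) : Prop := Summable fun k => lam k ^ α * ‖c k‖ ^ 2

/-- Membership in `Ḣ^α_⋄` (real-valued field with finite `Ḣ^α`-norm). -/
def MemH (α : ℝ) (c : Coef) : Prop := IsReal c ∧ FinH α c

/-- Membership in `Ḣ^∞_⋄ = C^∞(Ω)² ∩ Ḣ_⋄`: all Sobolev norms are finite. -/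
def MemHinf (c : Coef) : Prop := ∀ α : ℝ, MemH α c

/-- Real `Ḣ^α` inner product `⟨·,·⟩_{Ḣ^α}` (for real-valued fields). -/
def hInner (α : ℝ) (c d : Coef) : ℝ := ∑' k, lam k ^ α * (c k * (starRingEnd ℂ) (d k)).re

/-- The `L²` inner product. -/
def innerC (c d : Coef) : ℂ := ∑' k, c k * (starRingEnd ℂ) (d k)

/-- The unit vector `(k₂, −k₁)/|k|` spanning the divergence-free direction at
frequency `k`. -/
def evec (k : Freq) : ℝ × ℝ :=
  ((k.1.2 : ℝ) / Real.sqrt (knormSq k), -((k.1.1 : ℝ)) / Real.sqrt (knormSq k))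

/-- Euclidean dot product on `ℝ²`. -/
def dotR (a b : ℝ × ℝ) : ℝ := a.1 * b.1 + a.2 * b.2

/-- A frequency as a real vector. -/
def fvec (k : Freq) : ℝ × ℝ := ((k.1.1 : ℝ), (k.1.2 : ℝ))

/-- Fourier coefficients (along the basis `e_k`) of the Leray-projected
transport nonlinearity `B[u,v] = P[(u·∇)v]`:
`(B[u,v])^(k) · ē_k = 2πi Σ_{m+n=k, n≠0} c_m d_n (e_m·n)(e_n·e_k)`. -/
def Bc (c d : Coef) : Coef := fun k =>
  (((2 * Real.pi : ℝ) : ℂ) * Complex.I) *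
    ∑' m : Freq,
      if h : k.1 - m.1 ≠ 0 then
        c m * d ⟨k.1 - m.1, h⟩ *
          (((dotR (evec m) (fvec ⟨k.1 - m.1, h⟩) *
            dotR (evec ⟨k.1 - m.1, h⟩) (evec k) : ℝ)) : ℂ)
      else 0

/-- The Laplacian `Δ` acting on the scale: `(Δu)^(k) = −λ_k û(k)`. -/
def lapC (c : Coef) : Coef := fun k => -((lam k : ℝ) : ℂ) * c k

/-- Continuity of a trajectory `t ↦ u(t)`, `t ∈ [0,T]`, for the `Ḣ^α`-norm:
`u ∈ C([0,T], Ḣ^α_⋄)`. -/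
def ContH (α : ℝ) (T : ℝ) (u : ℝ → Coef) : Prop :=
  ∀ t ∈ Icc (0:ℝ) T, ∀ ε > 0, ∃ δ > 0, ∀ s ∈ Icc (0:ℝ) T,
    |s - t| < δ → hN α (u s - u t) < ε

/-- Membership `u ∈ L²([0,T], Ḣ^α_⋄)`. -/
def MemL2H (α : ℝ) (T : ℝ) (u : ℝ → Coef) : Prop :=
  (∀ t ∈ Ioc (0:ℝ) T, MemH α (u t)) ∧
    IntegrableOn (fun t => hSq α (u t)) (Ioc 0 T)

/-- `u` is a strong solution on `[0,T]` of the (Leray-projected) periodic 2D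
Navier–Stokes equations `du/dt + νAu + B[u,u] = f`, `u(0) = θ`, posed in `Ḣ_⋄`:
the Fourier coefficients satisfy the corresponding system of ODEs on `(0,T]`,
the trajectory is continuous into `Ḣ¹_⋄` (in particular at `t = 0`), and lies
in `L²([0,T], Ḣ²_⋄)`. -/
structure IsNSSol (ν : ℝ) (f : Coef) (T : ℝ) (θ : Coef) (u : ℝ → Coef) : Prop where
  init : u 0 = θ
  real : ∀ t ∈ Icc (0:ℝ) T, IsReal (u t)
  deriv : ∀ (k : Freq), ∀ t ∈ Ioc (0:ℝ) T,
    HasDerivAt (fun s => u s k)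
      (f k - ((ν * lam k : ℝ) : ℂ) * u t k - Bc (u t) (u t) k) t
  contH1 : ContH 1 T u
  memL2H2 : MemL2H 2 T u

/-- `U` solves the linear parabolic equation
`dU/dt − νΔU + B[u₀, U] + B[U, u₁] = g`, `U(0) = ξ`, on `[0,T]`. -/
structure IsLinPSol (ν : ℝ) (u₀ u₁ : ℝ → Coef) (g : ℝ → Coef) (T : ℝ) (ξ : Coef)
    (U : ℝ → Coef) : Prop where
  init : U 0 = ξ
  real : ∀ t ∈ Icc (0:ℝ) T, IsReal (U t)
  deriv : ∀ (k : Freq), ∀ t ∈ Ioc (0:ℝ) T,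
    HasDerivAt (fun s => U s k)
      (g t k - ((ν * lam k : ℝ) : ℂ) * U t k - Bc (u₀ t) (U t) k - Bc (U t) (u₁ t) k) t

/-- `U = 𝕀_θ[ξ]` solves the linearisation of Navier–Stokes along the
trajectory `u₀`: `dU/dt − νΔU + B[u₀,U] + B[U,u₀] = 0`, `U(0) = ξ`. -/
def IsLinSol (ν : ℝ) (u₀ : ℝ → Coef) (T : ℝ) (ξ : Coef) (U : ℝ → Coef) : Prop :=
  IsLinPSol ν u₀ u₀ (fun _ => 0) T ξ U

/-- The heat semigroup `S_t = e^{νtΔ}` on the scale `Ḣ^α_⋄`. -/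
def heatS (ν t : ℝ) (c : Coef) : Coef := fun k =>
  ((Real.exp (-(ν * lam k * t)) : ℝ) : ℂ) * c k

/-- Duhamel representation of the solution of the periodic heat equation
`du/dt − νΔu = g`, `u(0) = h`. -/
def heatSol (ν : ℝ) (g : ℝ → Coef) (h : Coef) : ℝ → Coef := fun t k =>
  ((Real.exp (-(ν * lam k * t)) : ℝ) : ℂ) *
    (h k + ∫ s in (0:ℝ)..t, ((Real.exp (ν * lam k * s) : ℝ) : ℂ) * g s k)

/-- Real-linearity of a map on the coefficient space. -/
def IsLinMap (Λ : Coef → Coef) : Prop :=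
  (∀ c d, Λ (c + d) = Λ c + Λ d) ∧ ∀ (r : ℝ) (c : Coef), Λ (r • c) = r • Λ c

/-- `Λ` defines a compact (linear) operator `Ḣ^α_⋄ → Ḣ^β_⋄`: it is linear,
maps `Ḣ^α_⋄` into `Ḣ^β_⋄`, and the image of the `Ḣ^α`-unit ball is totally
bounded for the `Ḣ^β`-norm. -/
def IsCompactOp (α β : ℝ) (Λ : Coef → Coef) : Prop :=
  IsLinMap Λ ∧ (∀ c, MemH α c → MemH β (Λ c)) ∧
    ∀ ε > 0, ∃ S : Finset Coef, ∀ c, MemH α c → hN α c ≤ 1 →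
      ∃ s ∈ S, hN β (Λ c - s) < ε

/-- The index `a* = |a|+1` if `|a| ≤ 1`, `a* = |a|` if `|a| ≥ 2`. -/
def astar (a : ℤ) : ℤ := if |a| ≤ 1 then |a| + 1 else |a|

/-- `i`-th component of the unit vector `evec k`. -/
def evecC (i : Fin 2) (k : Freq) : ℝ := if i = 0 then (evec k).1 else (evec k).2

/-- Fourier coefficients (over all of `ℤ²`) of the scalar component `u_i` of a
divergence-free field with coefficients `c`. -/
def compCoef (i : Fin 2) (c : Coef) : ℤ × ℤ → ℂ := fun n =>
  if h : n ≠ 0 then c ⟨n, h⟩ * ((evecC i ⟨n, h⟩ : ℝ) : ℂ) else 0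

/-- Convolution: Fourier coefficients of a pointwise product of two scalar
functions. -/
def convC (F G : ℤ × ℤ → ℂ) : ℤ × ℤ → ℂ := fun n => ∑' m : ℤ × ℤ, F m * G (n - m)

/-- Squared homogeneous Sobolev norm of a scalar function given by its Fourier
coefficients over `ℤ²`. -/
def hSqScalar (α : ℝ) (F : ℤ × ℤ → ℂ) : ℝ := ∑' k : Freq, lam k ^ α * ‖F k.1‖ ^ 2

/-- `‖u vᵀ‖²_{Ḣ^α} = Σ_{i,j=1}^2 ‖u_i v_j‖²_{Ḣ^α}`. -/
def hSqMat (α : ℝ) (c d : Coef) : ℝ :=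
  ∑ i : Fin 2, ∑ j : Fin 2, hSqScalar α (convC (compCoef i c) (compCoef j d))

/-- The character `exp(2πi k·x)`. -/
def efun (k : Freq) (x : ℝ × ℝ) : ℂ :=
  Complex.exp ((((2 * Real.pi : ℝ)) : ℂ) * Complex.I *
    ((k.1.1 : ℂ) * (x.1 : ℂ) + (k.1.2 : ℂ) * (x.2 : ℂ)))

/-- Pointwise evaluation of the `i`-th component of the field. -/
def evalComp (i : Fin 2) (c : Coef) (x : ℝ × ℝ) : ℂ :=
  ∑' k, c k * ((evecC i k : ℝ) : ℂ) * efun k x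

/-- Supremum norm (`C⁰`-norm) of the field. -/
def c0N (c : Coef) : ℝ := ⨆ x : ℝ × ℝ, max ‖evalComp 0 c x‖ ‖evalComp 1 c x‖

/-- The partial derivative `∂_j` acting on divergence-free fields. -/
def pderiv (j : Fin 2) (c : Coef) : Coef := fun k =>
  (((2 * Real.pi : ℝ) : ℂ) * Complex.I) *
    (if j = 0 then ((k.1.1 : ℤ) : ℂ) else ((k.1.2 : ℤ) : ℂ)) * c k

/-- `C¹`-norm of the field. -/
def c1N (c : Coef) : ℝ := c0N c + c0N (pderiv 0 c) + c0N (pderiv 1 c)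

/-- Norm of the multiplier space `B^ℓ`: `C^ℓ(Ω)²` for `ℓ ≤ 1` and `Ḣ^ℓ` for
`ℓ ≥ 2`. -/
def bN (ℓ : ℕ) (c : Coef) : ℝ :=
  if ℓ = 0 then c0N c else if ℓ = 1 then c1N c else hN (ℓ : ℝ) c

end NS2D

namespace NS2D

section Weights
open scoped ENNReal

/-- Cauchy–Schwarz for sums in `ℝ≥0∞`. -/
lemma cs_tsum {ι : Type*} (x y : ι → ℝ≥0∞) :
    (∑' i, x i * y i) ^ 2 ≤ (∑' i, x i ^ 2) * ∑' i, y i ^ 2 := by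
  have h2 : (2:ℝ).HolderConjugate 2 := by
    rw [Real.holderConjugate_iff]; norm_num
  have key : ∑' i, x i * y i ≤
      (∑' i, x i ^ 2) ^ (1/2:ℝ) * (∑' i, y i ^ 2) ^ (1/2:ℝ) := by
    rw [ENNReal.tsum_eq_iSup_sum]
    refine iSup_le fun s => ?_
    refine (ENNReal.inner_le_Lp_mul_Lq s x y h2).trans ?_
    simp only [ENNReal.rpow_two]
    gcongr <;> exact ENNReal.sum_le_tsum s
  calc _ ≤ ((∑' i, x i ^ 2) ^ (1/2:ℝ) * (∑' i, y i ^ 2) ^ (1/2:ℝ)) ^ 2 := by gcongr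
    _ = _ := by
      rw [mul_pow, ← ENNReal.rpow_mul_natCast, ← ENNReal.rpow_mul_natCast]; norm_num

/-- `4π²|n|²` on all of `ℤ²`. -/
def ell (n : ℤ × ℤ) : ℝ := 4 * Real.pi ^ 2 * ((n.1 : ℝ) ^ 2 + (n.2 : ℝ) ^ 2)

lemma one_le_sq {n : ℤ × ℤ} (h : n ≠ 0) : 1 ≤ (n.1 : ℝ) ^ 2 + (n.2 : ℝ) ^ 2 := by
  have : 1 ≤ n.1 ^ 2 + n.2 ^ 2 := by
    by_contra hc
    have h1 : n.1 ^ 2 = 0 := by nlinarith [sq_nonneg n.1, sq_nonneg n.2]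
    have h2 : n.2 ^ 2 = 0 := by nlinarith [sq_nonneg n.1, sq_nonneg n.2]
    exact h (Prod.ext (by simpa using h1) (by simpa using h2))
  exact_mod_cast this

lemma four_pi_ge : (4:ℝ) ≤ 4 * Real.pi ^ 2 := by
  nlinarith [Real.pi_gt_three]

lemma one_le_ell {n : ℤ × ℤ} (h : n ≠ 0) : 1 ≤ ell n := by
  unfold ell; nlinarith [one_le_sq h, four_pi_ge]

lemma ell_pos {n : ℤ × ℤ} (h : n ≠ 0) : 0 < ell n := lt_of_lt_of_le one_pos (one_le_ell h)

lemma ell_nonneg (n : ℤ × ℤ) : 0 ≤ ell n := by unfold ell; positivity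

lemma ell_add (m n : ℤ × ℤ) : ell (m + n) ≤ 2 * (ell m + ell n) := by
  unfold ell
  push_cast [Prod.fst_add, Prod.snd_add]
  have : (0:ℝ) ≤ 4 * Real.pi ^ 2 := by positivity
  nlinarith [mul_nonneg this (sq_nonneg ((m.1:ℝ) - n.1)), mul_nonneg this (sq_nonneg ((m.2:ℝ) - n.2))]

/-- Weights `λ^s`, set to `0` at the zero frequency. -/
def W (s : ℝ) (n : ℤ × ℤ) : ℝ≥0∞ := if n = 0 then 0 else ENNReal.ofReal (ell n ^ s)

@[simp] lemma W_zero (s : ℝ) : W s 0 = 0 := by simp [W]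

lemma W_ne_top (s : ℝ) (n) : W s n ≠ ⊤ := by unfold W; split_ifs <;> simp

lemma W_mul (s r : ℝ) (n) : W s n * W r n = W (s + r) n := by
  unfold W; split_ifs with h
  · simp
  · rw [← ENNReal.ofReal_mul (by have := ell_nonneg n; positivity), Real.rpow_add (ell_pos h)]

lemma W_sq (s : ℝ) (n) : W s n ^ 2 = W (2 * s) n := by rw [sq, W_mul]; ring_nf

lemma W_0 {n : ℤ × ℤ} (h : n ≠ 0) : W 0 n = 1 := by simp [W, h]

lemma W_mono {s r : ℝ} (h : s ≤ r) (n) : W s n ≤ W r n := by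
  unfold W; split_ifs with hn
  · simp
  · exact ENNReal.ofReal_le_ofReal (Real.rpow_le_rpow_of_exponent_le (one_le_ell hn) h)

lemma W_neg (s : ℝ) (n) : W s (-n) = W s n := by
  unfold W ell; simp

lemma W_add {α : ℝ} (hα : 0 ≤ α) {m n : ℤ × ℤ} (hm : m ≠ 0) (hn : n ≠ 0) :
    W α (m + n) ≤ ENNReal.ofReal (4 ^ α) * (W α m + W α n) := by
  by_cases h : m + n = 0
  · simp [h]
  simp only [W, h, hm, hn, if_false]
  have p1 := ell_pos hm
  have p2 := ell_pos hn
  rw [← ENNReal.ofReal_add (by positivity) (by positivity), ← ENNReal.ofReal_mul (by positivity)]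
  apply ENNReal.ofReal_le_ofReal
  have h1 := ell_add m n
  rcases le_total (ell m) (ell n) with hl | hl
  · calc ell (m+n) ^ α ≤ (4 * ell n) ^ α :=
          Real.rpow_le_rpow (ell_nonneg _) (by linarith) hα
      _ = 4 ^ α * ell n ^ α := Real.mul_rpow (by norm_num) p2.le
      _ ≤ _ := by
        have : 0 ≤ ell m ^ α := by positivity
        gcongr; linarith
  · calc ell (m+n) ^ α ≤ (4 * ell m) ^ α :=
          Real.rpow_le_rpow (ell_nonneg _) (by linarith) hα
      _ = 4 ^ α * ell m ^ α := Real.mul_rpow (by norm_num) p1.le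
      _ ≤ _ := by
        have : 0 ≤ ell n ^ α := by positivity
        gcongr; linarith

lemma W_young {p q : ℝ} (hp : 0 ≤ p) (hq : 0 ≤ q) (m n : ℤ × ℤ) :
    W (-p) m * W (-q) n ≤ W (-(p+q)) m + W (-(p+q)) n := by
  by_cases hm : m = 0
  · simp [hm]
  by_cases hn : n = 0
  · simp [hn]
  have p1 := ell_pos hm
  have p2 := ell_pos hn
  rcases le_total (ell m) (ell n) with hl | hl
  · refine le_trans ?_ le_self_add
    have : W (-q) n ≤ W (-q) m := by
      simp only [W, hm, hn, if_false]
      exact ENNReal.ofReal_le_ofReal (Real.rpow_le_rpow_of_nonpos p1 hl (by linarith))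
    calc _ ≤ W (-p) m * W (-q) m := by gcongr
      _ = _ := by rw [W_mul]; ring_nf
  · refine le_trans ?_ le_add_self
    have : W (-p) m ≤ W (-p) n := by
      simp only [W, hm, hn, if_false]
      exact ENNReal.ofReal_le_ofReal (Real.rpow_le_rpow_of_nonpos p2 hl (by linarith))
    calc _ ≤ W (-p) n * W (-q) n := by gcongr
      _ = _ := by rw [W_mul]; ring_nf

/-- The lattice sum `∑ λ^{-3/2}`. -/
def ZZ : ℝ≥0∞ := ∑' n, W (-(3/2)) n

lemma ZZ_ne_top : ZZ ≠ ⊤ := by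
  have h := EisensteinSeries.summable_one_div_norm_rpow (k := 3) (by norm_num)
  rw [← (finTwoArrowEquiv ℤ).symm.summable_iff] at h
  have h' := h.tsum_ofReal_ne_top
  refine ne_top_of_le_ne_top h' (ENNReal.tsum_le_tsum fun n => ?_)
  unfold W; split_ifs with hn
  · simp
  apply ENNReal.ofReal_le_ofReal
  simp only [Function.comp]
  set x := (finTwoArrowEquiv ℤ).symm n with hx
  have hx0 : x 0 = n.1 := rfl
  have hx1 : x 1 = n.2 := rfl
  have hxne : x ≠ 0 := fun h0 => hn (by
    ext
    · rw [← hx0, h0]; rfl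
    · rw [← hx1, h0]; rfl)
  have hpos : 0 < ‖x‖ := norm_pos_iff.mpr hxne
  have hle : ‖x‖ ^ 2 ≤ ell n := by
    have h1 : ‖x‖ ≤ Real.sqrt ((n.1 : ℝ) ^ 2 + (n.2 : ℝ) ^ 2) := by
      rw [pi_norm_le_iff_of_nonneg (Real.sqrt_nonneg _)]
      intro i
      fin_cases i
      · simp only [Fin.zero_eta, hx0, Int.norm_eq_abs]
        exact Real.abs_le_sqrt (by nlinarith [sq_nonneg (n.2:ℝ)])
      · simp only [Fin.mk_one, hx1, Int.norm_eq_abs]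
        exact Real.abs_le_sqrt (by nlinarith [sq_nonneg (n.1:ℝ)])
    have h2 : ‖x‖ ^ 2 ≤ (n.1 : ℝ) ^ 2 + (n.2 : ℝ) ^ 2 := by
      have := pow_le_pow_left₀ hpos.le h1 2
      rwa [Real.sq_sqrt (by positivity)] at this
    unfold ell
    nlinarith [four_pi_ge, one_le_sq hn]
  calc ell n ^ (-(3/2):ℝ) ≤ (‖x‖ ^ 2) ^ (-(3/2):ℝ) :=
        Real.rpow_le_rpow_of_nonpos (by positivity) hle (by norm_num)
    _ = ‖x‖ ^ (-3:ℝ) := by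
        rw [← Real.rpow_natCast, ← Real.rpow_mul hpos.le]; norm_num

/-- Convolution in `ℝ≥0∞`. -/
def cv (X Y : ℤ × ℤ → ℝ≥0∞) (k : ℤ × ℤ) : ℝ≥0∞ := ∑' m, X m * Y (k - m)

/-- Weighted square sums. -/
def NN (s : ℝ) (X : ℤ × ℤ → ℝ≥0∞) : ℝ≥0∞ := ∑' n, W s n * X n ^ 2

lemma NN_mono {s r : ℝ} (h : s ≤ r) (X) : NN s X ≤ NN r X :=
  ENNReal.tsum_le_tsum fun n => by gcongr; exact W_mono h n

lemma cv_comm (X Y) (k) : cv X Y k = cv Y X k := by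
  unfold cv
  rw [← (Equiv.subLeft k).tsum_eq]
  refine tsum_congr fun m => ?_
  simp [mul_comm]

lemma tsum_shift (Y : ℤ × ℤ → ℝ≥0∞) (m) : ∑' k, Y (k - m) = ∑' k, Y k :=
  (Equiv.subRight m).tsum_eq Y

lemma tsum_cv (X Y) : ∑' k, cv X Y k = (∑' m, X m) * ∑' n, Y n := by
  unfold cv
  rw [ENNReal.tsum_comm, ← ENNReal.tsum_mul_right]
  refine tsum_congr fun m => ?_
  rw [ENNReal.tsum_mul_left, tsum_shift]

lemma cv_W {p q : ℝ} (hp : 0 ≤ p) (hq : 0 ≤ q) (hpq : 3/2 ≤ p + q) (k) :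
    cv (W (-p)) (W (-q)) k ≤ 2 * ZZ := by
  unfold cv
  calc _ ≤ ∑' m, (W (-(3/2)) m + W (-(3/2)) (k - m)) := by
        refine ENNReal.tsum_le_tsum fun m => (W_young hp hq _ _).trans ?_
        gcongr <;> exact W_mono (by linarith) _
    _ = ZZ + ZZ := by
        rw [ENNReal.tsum_add]
        congr 1
        exact (Equiv.subLeft k).tsum_eq (W (-(3/2)))
    _ = _ := by ring

lemma cv_mono {X X' Y Y' : ℤ × ℤ → ℝ≥0∞} (h : ∀ n, X n ≤ X' n) (h' : ∀ n, Y n ≤ Y' n) (k) :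
    cv X Y k ≤ cv X' Y' k := ENNReal.tsum_le_tsum fun m => by gcongr <;> simp [h, h']

lemma W_cv {α p q : ℝ} (hα : 0 ≤ α) (hp : α ≤ p) (hq : α ≤ q) (hpq : 3/2 ≤ p + q - α) (k) :
    W α k * cv (W (-p)) (W (-q)) k ≤ ENNReal.ofReal (4 ^ α) * (4 * ZZ) := by
  have : W α k * cv (W (-p)) (W (-q)) k ≤ ENNReal.ofReal (4 ^ α) *
      (cv (W (-(p - α))) (W (-q)) k + cv (W (-p)) (W (-(q-α))) k) := by
    unfold cv
    rw [← ENNReal.tsum_add, ← ENNReal.tsum_mul_left, ← ENNReal.tsum_mul_left]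
    refine ENNReal.tsum_le_tsum fun m => ?_
    by_cases hm : m = 0
    · simp [hm]
    by_cases hn : k - m = 0
    · simp [hn]
    have h := W_add hα hm hn
    rw [add_sub_cancel] at h
    calc _ ≤ ENNReal.ofReal (4 ^ α) * (W α m + W α (k-m)) * (W (-p) m * W (-q) (k-m)) := by gcongr
      _ = ENNReal.ofReal (4 ^ α) * ((W α m * W (-p) m) * W (-q) (k-m)
            + W (-p) m * (W α (k-m) * W (-q) (k-m))) := by ring
      _ = _ := by rw [W_mul, W_mul]; ring_nf
  refine this.trans ?_
  gcongr
  calc _ ≤ 2 * ZZ + 2 * ZZ := by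
        gcongr
        · exact cv_W (by linarith) (by linarith) (by linarith) k
        · exact cv_W (by linarith) (by linarith) (by linarith) k
    _ = _ := by ring

lemma W_split (s : ℝ) {X : ℤ × ℤ → ℝ≥0∞} (hX : X 0 = 0) (m) :
    X m = (W (s/2) m * X m) * W (-s/2) m := by
  by_cases hm : m = 0
  · simp [hm, hX]
  · rw [mul_right_comm, W_mul, show s/2 + -s/2 = 0 by ring, W_0 hm, one_mul]

lemma Q_bound {V : ℤ × ℤ → ℝ≥0∞} {K : ℝ≥0∞} {s r : ℝ}
    (hK : ∀ k, V k * cv (W (-s)) (W (-r)) k ≤ K) {X Y : ℤ × ℤ → ℝ≥0∞}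
    (hX : X 0 = 0) (hY : Y 0 = 0) :
    ∑' k, V k * cv X Y k ^ 2 ≤ K * (NN s X * NN r Y) := by
  have h1 : ∀ k, cv X Y k ^ 2 ≤ cv (fun m => W s m * X m ^ 2) (fun m => W r m * Y m ^ 2) k *
      cv (W (-s)) (W (-r)) k := by
    intro k
    have : cv X Y k = ∑' m, ((W (s/2) m * X m) * (W (r/2) (k-m) * Y (k-m))) *
        (W (-s/2) m * W (-r/2) (k-m)) := by
      refine tsum_congr fun m => ?_
      conv_lhs => rw [W_split s hX m, W_split r hY (k-m)]
      ring
    rw [this]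
    refine (cs_tsum _ _).trans (le_of_eq ?_)
    unfold cv
    congr 1
    · refine tsum_congr fun m => ?_
      rw [mul_pow, mul_pow, mul_pow, W_sq, W_sq]; ring_nf
    · refine tsum_congr fun m => ?_
      rw [mul_pow, W_sq, W_sq]; ring_nf
  calc _ ≤ ∑' k, K * cv (fun m => W s m * X m ^ 2) (fun m => W r m * Y m ^ 2) k := by
        refine ENNReal.tsum_le_tsum fun k => ?_
        calc _ ≤ V k * (cv (fun m => W s m * X m ^ 2) (fun m => W r m * Y m ^ 2) k *
              cv (W (-s)) (W (-r)) k) := by gcongr; exact h1 k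
          _ = (V k * cv (W (-s)) (W (-r)) k) *
              cv (fun m => W s m * X m ^ 2) (fun m => W r m * Y m ^ 2) k := by ring
          _ ≤ _ := by gcongr; exact hK k
    _ = _ := by rw [ENNReal.tsum_mul_left, tsum_cv]; rfl

/-- Tame product estimate. -/
lemma tame {s : ℝ} (hs : 0 ≤ s) : ∃ K : ℝ≥0∞, K ≠ ⊤ ∧ ∀ X : ℤ × ℤ → ℝ≥0∞, X 0 = 0 →
    ∑' k, W s k * cv X X k ^ 2 ≤ K * (NN s X * NN (3/2) X) := by
  refine ⟨(2 * ENNReal.ofReal (4 ^ (s/2))) ^ 2 * (ENNReal.ofReal (4 ^ (0:ℝ)) * (4 * ZZ)), ?_, ?_⟩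
  · have := ZZ_ne_top
    finiteness
  intro X hX
  set Y : ℤ × ℤ → ℝ≥0∞ := fun m => W (s/2) m * X m with hYd
  have hY : Y 0 = 0 := by simp [hYd]
  have h1 : ∀ k, W (s/2) k * cv X X k ≤ 2 * ENNReal.ofReal (4 ^ (s/2)) * cv Y X k := by
    intro k
    calc _ ≤ ENNReal.ofReal (4 ^ (s/2)) * (cv Y X k + cv X Y k) := by
          unfold cv
          rw [← ENNReal.tsum_add, ← ENNReal.tsum_mul_left, ← ENNReal.tsum_mul_left]
          refine ENNReal.tsum_le_tsum fun m => ?_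
          by_cases hm : m = 0
          · simp [hm, hX]
          by_cases hn : k - m = 0
          · simp [hn, hX]
          have h := W_add (show 0 ≤ s/2 by linarith) hm hn
          rw [add_sub_cancel] at h
          calc _ ≤ ENNReal.ofReal (4 ^ (s/2)) * (W (s/2) m + W (s/2) (k-m)) * (X m * X (k-m)) := by
                gcongr
            _ = _ := by simp only [hYd]; ring
      _ = _ := by rw [cv_comm X Y]; ring
  have h2 : NN 0 Y = NN s X := by
    unfold NN
    refine tsum_congr fun n => ?_
    simp only [hYd]
    rw [mul_pow, W_sq, ← mul_assoc, W_mul]; ring_nf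
  calc _ ≤ ∑' k, (2 * ENNReal.ofReal (4 ^ (s/2))) ^ 2 * (W 0 k * cv Y X k ^ 2) := by
        refine ENNReal.tsum_le_tsum fun k => ?_
        by_cases hk : k = 0
        · simp [hk]
        rw [W_0 hk, one_mul, ← mul_pow]
        calc _ = (W (s/2) k * cv X X k) ^ 2 := by rw [mul_pow, W_sq]; ring_nf
          _ ≤ _ := pow_le_pow_left' (h1 k) 2
    _ ≤ (2 * ENNReal.ofReal (4 ^ (s/2))) ^ 2 * (ENNReal.ofReal (4 ^ (0:ℝ)) * (4 * ZZ) *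
          (NN 0 Y * NN (3/2) X)) := by
        rw [ENNReal.tsum_mul_left]
        gcongr
        refine Q_bound (fun k => ?_) hY hX
        exact W_cv (le_refl _) (le_refl _) (by norm_num) (by norm_num) k
    _ = _ := by rw [h2]; ring

lemma NN_interp (X) : NN (3/2) X ^ 2 ≤ NN 1 X * NN 2 X := by
  have : NN (3/2) X = ∑' n, (W (1/2) n * X n) * (W 1 n * X n) := by
    refine tsum_congr fun n => ?_
    rw [show (W (1/2) n * X n) * (W 1 n * X n) = (W (1/2) n * W 1 n) * X n ^ 2 by ring, W_mul]
    norm_num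
  rw [this]
  refine (cs_tsum _ _).trans (le_of_eq ?_)
  unfold NN
  congr 1 <;> refine tsum_congr fun n => ?_ <;> rw [mul_pow, W_sq] <;> norm_num

/-- Trilinear estimate. -/
lemma trilin (a : ℤ) : ∃ K : ℝ≥0∞, K ≠ ⊤ ∧ ∀ X Y : ℤ × ℤ → ℝ≥0∞, X 0 = 0 → Y 0 = 0 →
    (∀ n, X (-n) = X n) →
    (∑' k, W (a + 1/2) k * Y k * cv X Y k) ^ 2 ≤
      K * (NN (max |(a:ℝ)| 1) X * NN (a + 1) Y ^ 2) := by
  rcases le_or_gt 0 a with ha | ha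
  · have ha' : (0:ℝ) ≤ a := by exact_mod_cast ha
    refine ⟨ENNReal.ofReal (4 ^ (a:ℝ)) * (4 * ZZ), ?_, ?_⟩
    · have := ZZ_ne_top
      finiteness
    intro X Y hX hY _
    have h1 : ∑' k, W (a + 1/2) k * Y k * cv X Y k =
        ∑' k, (W ((a+1)/2) k * Y k) * (W (a/2) k * cv X Y k) := by
      refine tsum_congr fun k => ?_
      rw [show (W ((a+1)/2) k * Y k) * (W (a/2) k * cv X Y k) =
        (W ((a+1)/2) k * W (a/2) k) * Y k * cv X Y k by ring, W_mul]
      ring_nf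
    rw [h1]
    refine (cs_tsum _ _).trans ?_
    have h2 : ∑' k, (W (((a:ℝ)+1)/2) k * Y k) ^ 2 = NN (a+1) Y := by
      refine tsum_congr fun n => ?_
      rw [mul_pow, W_sq]; ring_nf
    have h3 : ∑' k, (W ((a:ℝ)/2) k * cv X Y k) ^ 2 = ∑' k, W a k * cv X Y k ^ 2 := by
      refine tsum_congr fun n => ?_
      rw [mul_pow, W_sq]; ring_nf
    rw [h2, h3]
    have h4 : ∑' k, W a k * cv X Y k ^ 2 ≤ ENNReal.ofReal (4 ^ (a:ℝ)) * (4 * ZZ) *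
        (NN (max |(a:ℝ)| 1) X * NN (a+1) Y) := by
      refine Q_bound (fun k => W_cv ha' ?_ ?_ ?_ k) hX hY
      · rw [abs_of_nonneg ha']; exact le_max_left _ _
      · linarith
      · have := le_max_right |(a:ℝ)| 1
        linarith
    calc _ ≤ NN (a+1) Y * (ENNReal.ofReal (4 ^ (a:ℝ)) * (4 * ZZ) *
        (NN (max |(a:ℝ)| 1) X * NN (a+1) Y)) := by gcongr
      _ = _ := by ring
  · have ha' : (a:ℝ) ≤ -1 := by exact_mod_cast (by lia : a ≤ -1)
    refine ⟨ENNReal.ofReal (4 ^ (-(a:ℝ) - 1)) * (4 * ZZ), ?_, ?_⟩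
    · have := ZZ_ne_top
      finiteness
    intro X Y hX hY hev
    have hmax : max |(a:ℝ)| 1 = -a := by
      rw [abs_of_nonpos (by linarith)]; exact max_eq_left (by linarith)
    rw [hmax]
    set Y' : ℤ × ℤ → ℝ≥0∞ := fun k => W (a+1/2) k * Y k with hY'd
    have hY' : Y' 0 = 0 := by simp [hY'd]
    have h0 : ∑' k, W (a + 1/2) k * Y k * cv X Y k = ∑' n, Y n * cv Y' X n := by
      calc _ = ∑' k, ∑' n, Y' k * (Y n * X (k - n)) := by
            refine tsum_congr fun k => ?_
            rw [cv_comm X Y]; unfold cv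
            rw [ENNReal.tsum_mul_left]
        _ = ∑' n, ∑' k, Y n * (Y' k * X (n - k)) := by
            rw [ENNReal.tsum_comm]
            refine tsum_congr fun n => tsum_congr fun k => ?_
            rw [← hev (n - k), neg_sub]; ring
        _ = _ := by
            refine tsum_congr fun n => ?_
            rw [ENNReal.tsum_mul_left]; rfl
    have h1 : ∑' n, Y n * cv Y' X n =
        ∑' k, (W ((a+1)/2) k * Y k) * (W (-(a+1)/2) k * cv Y' X k) := by
      refine tsum_congr fun k => ?_
      conv_lhs => rw [W_split (a+1) hY k]
      ring
    rw [h0, h1]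
    refine (cs_tsum _ _).trans ?_
    have h2 : ∑' k, (W (((a:ℝ)+1)/2) k * Y k) ^ 2 = NN (a+1) Y := by
      refine tsum_congr fun n => ?_
      rw [mul_pow, W_sq]; ring_nf
    have h3 : ∑' k, (W (-((a:ℝ)+1)/2) k * cv Y' X k) ^ 2 = ∑' k, W (-a-1) k * cv Y' X k ^ 2 := by
      refine tsum_congr fun n => ?_
      rw [mul_pow, W_sq]; ring_nf
    rw [h2, h3]
    have h5 : NN (-a) Y' = NN (a+1) Y := by
      unfold NN
      refine tsum_congr fun n => ?_
      simp only [hY'd]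
      rw [mul_pow, W_sq, ← mul_assoc, W_mul]; ring_nf
    have h4 : ∑' k, W (-a-1) k * cv Y' X k ^ 2 ≤ ENNReal.ofReal (4 ^ (-(a:ℝ)-1)) * (4 * ZZ) *
        (NN (-a) Y' * NN (-a) X) := by
      refine Q_bound (fun k => W_cv ?_ ?_ ?_ ?_ k) hY' hX <;> linarith
    rw [h5] at h4
    calc _ ≤ NN (a+1) Y * (ENNReal.ofReal (4 ^ (-(a:ℝ)-1)) * (4 * ZZ) *
        (NN (a+1) Y * NN (-a) X)) := by gcongr
      _ = _ := by ring

end Weights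

section Bridge
open scoped ENNReal

/-- Extension of the coefficients by zero to `ℤ²`. -/
def ex (c : Coef) (n : ℤ × ℤ) : ℂ := if h : n ≠ 0 then c ⟨n, h⟩ else 0

@[simp] lemma ex_zero (c : Coef) : ex c 0 = 0 := by simp [ex]

@[simp] lemma ex_freq (c : Coef) (k : Freq) : ex c k.1 = c k := by
  simp only [ex, dif_pos k.2]; rfl

/-- Extended norms of the coefficients. -/
def xn (c : Coef) (n : ℤ × ℤ) : ℝ≥0∞ := ‖ex c n‖ₑ

@[simp] lemma xn_zero (c : Coef) : xn c 0 = 0 := by simp [xn]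

@[simp] lemma xn_freq (c : Coef) (k : Freq) : xn c k.1 = ‖c k‖ₑ := by simp [xn]

lemma lam_eq (k : Freq) : lam k = ell k.1 := rfl

lemma lam_pos (k : Freq) : 0 < lam k := ell_pos k.2

lemma one_le_lam (k : Freq) : 1 ≤ lam k := one_le_ell k.2

lemma W_freq (s : ℝ) (k : Freq) : W s k.1 = ENNReal.ofReal (lam k ^ s) := by
  unfold W; rw [if_neg k.2]; rfl

lemma tsum_freq {α : Type*} [AddCommMonoid α] [TopologicalSpace α] (g : ℤ × ℤ → α) (hg : g 0 = 0) :
    ∑' k : Freq, g k.1 = ∑' n, g n := by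
  refine tsum_subtype_eq_of_support_subset (f := g) (s := {n | n ≠ 0}) ?_
  intro n hn h0
  exact hn (by rw [h0, hg])

instance : Countable Freq := inferInstanceAs (Countable {k : ℤ × ℤ // k ≠ 0})

/-- Extended squared Sobolev norm. -/
def eH (s : ℝ) (c : Coef) : ℝ≥0∞ := NN s (xn c)

lemma term_eq (s : ℝ) (c : Coef) (k : Freq) :
    ENNReal.ofReal (lam k ^ s * ‖c k‖ ^ 2) = W s k.1 * xn c k.1 ^ 2 := by
  have := lam_pos k
  rw [ENNReal.ofReal_mul (by positivity), W_freq, xn_freq, ENNReal.ofReal_pow (norm_nonneg _),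
    ofReal_norm]

lemma eH_eq (s : ℝ) (c : Coef) : eH s c = ∑' k : Freq, ENNReal.ofReal (lam k ^ s * ‖c k‖ ^ 2) := by
  unfold eH NN
  rw [← tsum_freq (fun n => W s n * xn c n ^ 2) (by simp)]
  exact tsum_congr fun k => (term_eq s c k).symm

lemma term_nonneg (s : ℝ) (c : Coef) (k : Freq) : 0 ≤ lam k ^ s * ‖c k‖ ^ 2 := by
  have := lam_pos k
  positivity

lemma hSq_nonneg (s : ℝ) (c : Coef) : 0 ≤ hSq s c := tsum_nonneg (term_nonneg s c)

lemma finH_iff (s : ℝ) (c : Coef) : FinH s c ↔ eH s c ≠ ⊤ := by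
  rw [eH_eq]
  constructor
  · intro h; exact h.tsum_ofReal_ne_top
  · intro h
    refine (ENNReal.summable_toReal h).congr fun k => ?_
    rw [ENNReal.toReal_ofReal (term_nonneg s c k)]

lemma hSq_eq (s : ℝ) (c : Coef) : hSq s c = (eH s c).toReal := by
  rw [eH_eq, ENNReal.tsum_toReal_eq (by simp)]
  refine tsum_congr fun k => ?_
  rw [ENNReal.toReal_ofReal (term_nonneg s c k)]

lemma eH_of_fin {s : ℝ} {c : Coef} (h : FinH s c) : eH s c = ENNReal.ofReal (hSq s c) := by
  rw [hSq_eq, ENNReal.ofReal_toReal ((finH_iff s c).1 h)]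

lemma eH_mono {s r : ℝ} (h : s ≤ r) (c) : eH s c ≤ eH r c := NN_mono h _

lemma FinH.mono {s r : ℝ} (h : s ≤ r) {c} (hc : FinH r c) : FinH s c := by
  rw [finH_iff] at *
  exact ne_top_of_le_ne_top hc (eH_mono h c)

lemma sum_le_eH (s : ℝ) (c : Coef) (F : Finset Freq) :
    ENNReal.ofReal (∑ k ∈ F, lam k ^ s * ‖c k‖ ^ 2) ≤ eH s c := by
  rw [eH_eq, ENNReal.ofReal_sum_of_nonneg fun k _ => term_nonneg s c k]
  exact ENNReal.sum_le_tsum F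

lemma sum_le_hSq {s : ℝ} {c : Coef} (h : FinH s c) (F : Finset Freq) :
    ∑ k ∈ F, lam k ^ s * ‖c k‖ ^ 2 ≤ hSq s c :=
  h.sum_le_tsum F fun k _ => term_nonneg s c k

lemma eH_sub (s : ℝ) (c d : Coef) : eH s c ≤ 2 * eH s (c - d) + 2 * eH s d := by
  rw [eH_eq, eH_eq, eH_eq, ← ENNReal.tsum_mul_left, ← ENNReal.tsum_mul_left, ← ENNReal.tsum_add]
  refine ENNReal.tsum_le_tsum fun k => ?_
  rw [show (2:ℝ≥0∞) = ENNReal.ofReal 2 by simp, ← ENNReal.ofReal_mul (by norm_num),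
    ← ENNReal.ofReal_mul (by norm_num), ← ENNReal.ofReal_add]
  · apply ENNReal.ofReal_le_ofReal
    have h1 : ‖c k‖ ≤ ‖(c - d) k‖ + ‖d k‖ := by
      calc ‖c k‖ = ‖(c - d) k + d k‖ := by simp
        _ ≤ _ := norm_add_le _ _
    have h2 : ‖c k‖ ^ 2 ≤ 2 * ‖(c-d) k‖ ^ 2 + 2 * ‖d k‖ ^ 2 := by
      have := pow_le_pow_left₀ (norm_nonneg _) h1 2
      nlinarith [sq_nonneg (‖(c-d) k‖ - ‖d k‖)]
    have := lam_pos k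
    have h3 : 0 ≤ lam k ^ s := by positivity
    nlinarith [mul_le_mul_of_nonneg_left h2 h3]
  · have := term_nonneg s (c-d) k; positivity
  · have := term_nonneg s d k; positivity

lemma finH_sub {s : ℝ} {c d : Coef} (hc : FinH s c) (hd : FinH s d) : FinH s (c - d) := by
  rw [finH_iff] at *
  have h := eH_sub s (c - d) (-d)
  have h2 : eH s (-d) = eH s d := by rw [eH_eq, eH_eq]; simp
  rw [h2, sub_neg_eq_add, sub_add_cancel] at h
  refine ne_top_of_le_ne_top ?_ h
  finiteness

lemma xn_even {c : Coef} (h : IsReal c) (n) : xn c (-n) = xn c n := by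
  by_cases hn : n = 0
  · simp [hn]
  · obtain ⟨k, rfl⟩ : ∃ k : Freq, k.1 = n := ⟨⟨n, hn⟩, rfl⟩
    have h1 : xn c (-k.1) = ‖c (fneg k)‖ₑ := xn_freq c (fneg k)
    rw [h1, xn_freq, h, ← ofReal_norm, ← ofReal_norm]; simp

/-- `m^⊥ · n`. -/
def JJ (m n : ℤ × ℤ) : ℝ := (m.2 : ℝ) * n.1 - (m.1 : ℝ) * n.2
/-- Dot product. -/
def DD (m n : ℤ × ℤ) : ℝ := (m.1 : ℝ) * n.1 + (m.2 : ℝ) * n.2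
/-- Modulus. -/
def nr (n : ℤ × ℤ) : ℝ := Real.sqrt ((n.1 : ℝ) ^ 2 + (n.2 : ℝ) ^ 2)

lemma nr_sq (n) : nr n ^ 2 = (n.1 : ℝ) ^ 2 + (n.2 : ℝ) ^ 2 := Real.sq_sqrt (by positivity)
lemma nr_nonneg (n) : 0 ≤ nr n := Real.sqrt_nonneg _
lemma nr_neg (n) : nr (-n) = nr n := by simp [nr]
lemma nr_pos {n : ℤ × ℤ} (h : n ≠ 0) : 0 < nr n :=
  Real.sqrt_pos.2 (lt_of_lt_of_le one_pos (one_le_sq h))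

lemma JJ_le (m n) : |JJ m n| ≤ nr m * nr n := by
  apply abs_le_of_sq_le_sq _ (mul_nonneg (nr_nonneg _) (nr_nonneg _))
  rw [mul_pow, nr_sq, nr_sq]; unfold JJ
  nlinarith [sq_nonneg ((m.1:ℝ) * n.1 + m.2 * n.2)]

lemma DD_le (m n) : |DD m n| ≤ nr m * nr n := by
  apply abs_le_of_sq_le_sq _ (mul_nonneg (nr_nonneg _) (nr_nonneg _))
  rw [mul_pow, nr_sq, nr_sq]; unfold DD
  nlinarith [sq_nonneg ((m.2:ℝ) * n.1 - m.1 * n.2)]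

/-- The summand of `Bc` over the whole lattice. -/
def bt (c d : Coef) (k m : ℤ × ℤ) : ℂ :=
  ex c m * ex d (k - m) * (((JJ m k / nr m) * (DD (k - m) k / (nr (k - m) * nr k)) : ℝ) : ℂ)

lemma Bc_eq (c d : Coef) (k : Freq) :
    Bc c d k = (((2 * Real.pi : ℝ) : ℂ) * Complex.I) * ∑' m, bt c d k.1 m := by
  unfold Bc
  rw [← tsum_freq (fun m => bt c d k.1 m) (by simp [bt])]
  congr 1
  refine tsum_congr fun m => ?_
  split_ifs with h
  · unfold bt
    rw [ex_freq]
    have : ex d (k.1 - m.1) = d ⟨k.1 - m.1, h⟩ := by simp only [ex, dif_pos h]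
    rw [this]
    congr 3
    · unfold dotR evec fvec JJ nr knormSq
      push_cast [Prod.fst_sub, Prod.snd_sub]
      ring
    · unfold dotR evec DD nr knormSq
      simp only
      ring
  · have : k.1 - m.1 = 0 := not_not.1 h
    simp [bt, this]

lemma bt_norm_le (c d : Coef) (k m) : ‖bt c d k m‖ ≤ nr k * (‖ex c m‖ * ‖ex d (k - m)‖) := by
  unfold bt
  rw [norm_mul, norm_mul, mul_comm]
  gcongr
  rw [Complex.norm_real, Real.norm_eq_abs, abs_mul]
  have h1 : |JJ m k / nr m| ≤ nr k := by
    rw [abs_div, abs_of_nonneg (nr_nonneg m)]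
    apply div_le_of_le_mul₀ (nr_nonneg _) (nr_nonneg _)
    rw [mul_comm]; exact JJ_le _ _
  have h2 : |DD (k-m) k / (nr (k-m) * nr k)| ≤ 1 := by
    rw [abs_div, abs_of_nonneg (mul_nonneg (nr_nonneg (k-m)) (nr_nonneg k))]
    apply div_le_of_le_mul₀ (mul_nonneg (nr_nonneg _) (nr_nonneg _)) zero_le_one
    rw [one_mul]; exact DD_le _ _
  calc _ ≤ nr k * 1 := by gcongr; exact nr_nonneg _
    _ = _ := mul_one _

lemma two_pi_nr {k : ℤ × ℤ} (hk : k ≠ 0) : ENNReal.ofReal (2 * Real.pi * nr k) = W (1/2) k := by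
  unfold W; rw [if_neg hk, ← Real.sqrt_eq_rpow]
  congr 1
  symm
  rw [Real.sqrt_eq_iff_mul_self_eq (ell_nonneg _) (by have := nr_nonneg k; positivity)]
  have := nr_sq k
  unfold ell; rw [← this]; ring

lemma Bc_le (c d : Coef) (k : Freq) : ‖Bc c d k‖ₑ ≤ W (1/2) k.1 * cv (xn c) (xn d) k.1 := by
  rw [Bc_eq, ← two_pi_nr k.2, enorm_mul]
  have h0 : ‖((2 * Real.pi : ℝ) : ℂ) * Complex.I‖ₑ = ENNReal.ofReal (2 * Real.pi) := by
    rw [← ofReal_norm]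
    congr 1
    rw [norm_mul, Complex.norm_I, Complex.norm_real, mul_one, Real.norm_of_nonneg (by positivity)]
  rw [h0, ENNReal.ofReal_mul (p := 2 * Real.pi) (by positivity), mul_assoc]
  gcongr
  refine (enorm_tsum_le_tsum_enorm (f := fun m => bt c d k.1 m)).trans ?_
  unfold cv
  rw [← ENNReal.tsum_mul_left]
  refine ENNReal.tsum_le_tsum fun m => ?_
  rw [← ofReal_norm]
  refine (ENNReal.ofReal_le_ofReal (bt_norm_le c d k.1 m)).trans (le_of_eq ?_)
  rw [ENNReal.ofReal_mul (nr_nonneg _), ENNReal.ofReal_mul (norm_nonneg _), ofReal_norm, ofReal_norm]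
  rfl

/-- `eH` bound of the nonlinearity. -/
lemma eH_Bc_le (s : ℝ) (c : Coef) :
    eH (s - 1) (Bc c c) ≤ ∑' k, W s k * cv (xn c) (xn c) k ^ 2 := by
  unfold eH NN
  refine ENNReal.tsum_le_tsum fun n => ?_
  by_cases hn : n = 0
  · simp [hn]
  have := Bc_le c c ⟨n, hn⟩
  calc W (s-1) n * xn (Bc c c) n ^ 2 ≤ W (s-1) n * (W (1/2) n * cv (xn c) (xn c) n) ^ 2 := by
        gcongr
        have h2 := xn_freq (Bc c c) ⟨n, hn⟩
        rw [h2]; exact this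
    _ = _ := by
        rw [mul_pow, W_sq, ← mul_assoc, W_mul]; ring_nf

lemma Bc_tame {s : ℝ} (hs : 0 ≤ s) : ∃ K : ℝ≥0∞, K ≠ ⊤ ∧ ∀ c : Coef,
    eH (s - 1) (Bc c c) ≤ K * (eH s c * eH (3/2) c) := by
  obtain ⟨K, hK, h⟩ := tame hs
  exact ⟨K, hK, fun c => (eH_Bc_le s c).trans (h _ (xn_zero c))⟩

/-- The linear trilinear bound used for the linearised equation. -/
lemma lin_bound (a : ℤ) : ∃ K : ℝ≥0∞, K ≠ ⊤ ∧ ∀ c d : Coef, IsReal c →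
    (∑' k : Freq, ENNReal.ofReal (lam k ^ (a:ℝ) * ‖d k‖ * (‖Bc c d k‖ + ‖Bc d c k‖))) ^ 2 ≤
      K * (eH (max |(a:ℝ)| 1) c * eH (a + 1) d ^ 2) := by
  obtain ⟨K, hK, h⟩ := trilin a
  refine ⟨2 ^ 2 * K, by finiteness, fun c d hc => ?_⟩
  have h1 : ∑' k : Freq, ENNReal.ofReal (lam k ^ (a:ℝ) * ‖d k‖ * (‖Bc c d k‖ + ‖Bc d c k‖)) ≤
      2 * ∑' k, W (a + 1/2) k * xn d k * cv (xn c) (xn d) k := by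
    rw [← tsum_freq (fun k => W (a + 1/2) k * xn d k * cv (xn c) (xn d) k) (by simp),
      ← ENNReal.tsum_mul_left]
    refine ENNReal.tsum_le_tsum fun k => ?_
    have := lam_pos k
    rw [ENNReal.ofReal_mul (by positivity), ENNReal.ofReal_mul (by positivity),
      ENNReal.ofReal_add (norm_nonneg _) (norm_nonneg _), ofReal_norm, ofReal_norm, ofReal_norm,
      ← W_freq]
    have e1 := Bc_le c d k
    have e2 := Bc_le d c k
    rw [cv_comm] at e2
    calc _ ≤ W a k.1 * ‖d k‖ₑ * (W (1/2) k.1 * cv (xn c) (xn d) k.1 +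
          W (1/2) k.1 * cv (xn c) (xn d) k.1) := by gcongr
      _ = 2 * ((W a k.1 * W (1/2) k.1) * xn d k.1 * cv (xn c) (xn d) k.1) := by
          rw [xn_freq]; ring
      _ = _ := by rw [W_mul]
  calc _ ≤ (2 * ∑' k, W (a + 1/2) k * xn d k * cv (xn c) (xn d) k) ^ 2 := pow_le_pow_left' h1 2
    _ ≤ _ := by
      rw [mul_pow, mul_assoc]
      gcongr
      exact h _ _ (xn_zero c) (xn_zero d) (xn_even hc)

end Bridge

section Cancellation
open scoped ENNReal

lemma ofReal_nr_le (n : ℤ × ℤ) : ENNReal.ofReal (nr n) ≤ W (1/2) n := by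
  by_cases hn : n = 0
  · simp [hn, nr]
  · rw [← two_pi_nr hn]
    apply ENNReal.ofReal_le_ofReal
    nlinarith [Real.pi_gt_three, nr_pos hn]

/-- Dominating function for the cancellation sums. -/
def gdom (c : Coef) (p : (ℤ × ℤ) × (ℤ × ℤ)) : ℝ :=
  nr p.1 ^ 2 * ‖ex c (-p.1)‖ * (‖ex c p.2‖ * (nr (p.1 - p.2) * ‖ex c (p.1 - p.2)‖))

lemma gdom_nonneg (c : Coef) (p) : 0 ≤ gdom c p := by
  have h1 := nr_nonneg p.1
  have h2 := nr_nonneg (p.1 - p.2)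
  unfold gdom; positivity

lemma gdom_summable {c : Coef} (hr : IsReal c) (hc : FinH 2 c) : Summable (gdom c) := by
  rw [finH_iff] at hc
  set Y : ℤ × ℤ → ℝ≥0∞ := fun n => W (1/2) n * xn c n with hY
  have hY0 : Y 0 = 0 := by simp [hY]
  have hNY : NN 0 Y = NN 1 (xn c) := by
    unfold NN
    refine tsum_congr fun n => ?_
    simp only [hY]
    rw [mul_pow, W_sq, ← mul_assoc, W_mul]; norm_num
  have h1 : ∑' p, ENNReal.ofReal (gdom c p) ≤ ∑' k, (W 1 k * xn c k) * (W 0 k * cv (xn c) Y k) := by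
    refine (ENNReal.tsum_prod (f := fun k m => ENNReal.ofReal (gdom c (k, m)))).trans_le ?_
    refine ENNReal.tsum_le_tsum fun k => ?_
    calc _ ≤ ∑' m, (W 1 k * xn c k) * (xn c m * Y (k - m)) := by
          refine ENNReal.tsum_le_tsum fun m => ?_
          have i1 := nr_nonneg k
          have i2 := nr_nonneg (k - m)
          unfold gdom
          rw [ENNReal.ofReal_mul (by positivity), ENNReal.ofReal_mul (by positivity),
            ENNReal.ofReal_mul (by positivity), ENNReal.ofReal_mul (by positivity),
            ENNReal.ofReal_pow (by positivity), ofReal_norm, ofReal_norm, ofReal_norm]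
          have e1 : ENNReal.ofReal (nr k) ^ 2 ≤ W 1 k := by
            calc _ ≤ W (1/2) k ^ 2 := pow_le_pow_left' (ofReal_nr_le k) 2
              _ = _ := by rw [W_sq]; norm_num
          have e2 := ofReal_nr_le (k - m)
          have e3 : ‖ex c (-k)‖ₑ = xn c k := xn_even hr k
          rw [e3]
          simp only [hY]
          unfold xn
          gcongr
      _ = (W 1 k * xn c k) * cv (xn c) Y k := by rw [ENNReal.tsum_mul_left]; rfl
      _ ≤ _ := by
          by_cases hk : k = 0
          · simp [hk]
          · rw [W_0 hk, one_mul]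
  have h2 : (∑' k, (W 1 k * xn c k) * (W 0 k * cv (xn c) Y k)) ^ 2 ≠ ⊤ := by
    refine ne_top_of_le_ne_top ?_ (cs_tsum _ _)
    have e1 : ∑' k, (W 1 k * xn c k) ^ 2 = eH 2 c := by
      refine tsum_congr fun n => ?_
      rw [mul_pow, W_sq]; norm_num
    have e2 : ∑' k, (W 0 k * cv (xn c) Y k) ^ 2 = ∑' k, W 0 k * cv (xn c) Y k ^ 2 := by
      refine tsum_congr fun n => ?_
      rw [mul_pow, W_sq]; norm_num
    have e3 := Q_bound (V := W 0) (s := 3/2) (r := 0)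
      (fun k => W_cv (le_refl _) (by norm_num) (le_refl _) (by norm_num) k) (xn_zero c) hY0
    rw [e1, e2]
    refine ENNReal.mul_ne_top hc (ne_top_of_le_ne_top ?_ e3)
    rw [hNY]
    have f1 : NN (3/2) (xn c) ≠ ⊤ := ne_top_of_le_ne_top hc (NN_mono (by norm_num) _)
    have f2 : NN 1 (xn c) ≠ ⊤ := ne_top_of_le_ne_top hc (NN_mono (by norm_num) _)
    have := ZZ_ne_top
    finiteness
  have h3 : ∑' p, ENNReal.ofReal (gdom c p) ≠ ⊤ := by
    refine ne_top_of_le_ne_top ?_ h1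
    intro h; rw [h] at h2; simp at h2
  refine (ENNReal.summable_toReal h3).congr fun p => ?_
  rw [ENNReal.toReal_ofReal (gdom_nonneg c p)]

/-- `c_n/|n|`. -/
def ww (c : Coef) (n : ℤ × ℤ) : ℂ := ex c n / (nr n : ℂ)

/-- First trilinear kernel. -/
def GG (c : Coef) (p : (ℤ × ℤ) × (ℤ × ℤ)) : ℂ :=
  ww c (-p.1) * ww c p.2 * ww c (p.1 - p.2) *
    ((nr p.1 ^ 2 * JJ p.2 p.1 * DD (p.1 - p.2) p.1 : ℝ) : ℂ)

/-- Second trilinear kernel. -/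
def HH (c : Coef) (p : (ℤ × ℤ) × (ℤ × ℤ)) : ℂ :=
  ww c (-p.1) * ww c p.2 * ww c (p.1 - p.2) *
    ((nr p.1 ^ 2 * nr (p.1 - p.2) ^ 2 * JJ p.2 p.1 : ℝ) : ℂ)

lemma ww_norm (c : Coef) (n) : ‖ww c n‖ * nr n = ‖ex c n‖ := by
  unfold ww
  by_cases hn : n = 0
  · simp [hn]
  · rw [norm_div, Complex.norm_real, Real.norm_of_nonneg (nr_nonneg _),
      div_mul_cancel₀ _ (nr_pos hn).ne']

lemma JJ_sub (m k) : JJ m (k - m) = JJ m k := by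
  unfold JJ; push_cast [Prod.fst_sub, Prod.snd_sub]; ring

lemma GG_le (c : Coef) (p) : ‖GG c p‖ ≤ gdom c p := by
  obtain ⟨k, m⟩ := p
  unfold GG gdom
  simp only
  rw [← ww_norm c (-k), ← ww_norm c m, ← ww_norm c (k - m), norm_mul, norm_mul, norm_mul,
    Complex.norm_real, Real.norm_eq_abs, abs_mul, abs_mul, nr_neg, abs_of_nonneg (sq_nonneg _)]
  have h1 := JJ_le m (k - m)
  rw [JJ_sub] at h1
  have h2 := DD_le (k - m) k
  have i1 := nr_nonneg k
  have i2 := nr_nonneg (k - m)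
  have i3 := nr_nonneg m
  calc _ ≤ ‖ww c (-k)‖ * ‖ww c m‖ * ‖ww c (k-m)‖ *
        (nr k ^ 2 * (nr m * nr (k-m)) * (nr (k-m) * nr k)) := by gcongr
    _ = _ := by ring

lemma HH_le (c : Coef) (p) : ‖HH c p‖ ≤ gdom c p := by
  obtain ⟨k, m⟩ := p
  unfold HH gdom
  simp only
  rw [← ww_norm c (-k), ← ww_norm c m, ← ww_norm c (k - m), norm_mul, norm_mul, norm_mul,
    Complex.norm_real, Real.norm_eq_abs, abs_mul, abs_mul, nr_neg, abs_of_nonneg (sq_nonneg _),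
    abs_of_nonneg (sq_nonneg _)]
  have h1 := JJ_le m k
  have i1 := nr_nonneg k
  have i2 := nr_nonneg (k - m)
  have i3 := nr_nonneg m
  calc _ ≤ ‖ww c (-k)‖ * ‖ww c m‖ * ‖ww c (k-m)‖ *
        (nr k ^ 2 * nr (k-m) ^ 2 * (nr m * nr k)) := by gcongr
    _ = _ := by ring

/-- Swap of the two summands of `k`. -/
def sw1 : ((ℤ × ℤ) × (ℤ × ℤ)) ≃ ((ℤ × ℤ) × (ℤ × ℤ)) where
  toFun p := (p.1, p.1 - p.2)
  invFun p := (p.1, p.1 - p.2)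
  left_inv p := by simp
  right_inv p := by simp

/-- Swap of `-k` with `k - m`. -/
def sw2 : ((ℤ × ℤ) × (ℤ × ℤ)) ≃ ((ℤ × ℤ) × (ℤ × ℤ)) where
  toFun p := (p.2 - p.1, p.2)
  invFun p := (p.2 - p.1, p.2)
  left_inv p := by simp
  right_inv p := by simp

lemma GG_sw (c : Coef) (p) : GG c p + GG c (sw1 p) = HH c p + HH c (sw1 p) := by
  obtain ⟨k, m⟩ := p
  simp only [GG, HH, sw1, Equiv.coe_fn_mk, sub_sub_cancel]
  have : (nr k ^ 2 * JJ m k * DD (k - m) k + nr k ^ 2 * JJ (k - m) k * DD m k : ℝ)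
      = nr k ^ 2 * nr (k - m) ^ 2 * JJ m k + nr k ^ 2 * nr m ^ 2 * JJ (k - m) k := by
    rw [nr_sq, nr_sq, nr_sq]; unfold JJ DD
    push_cast [Prod.fst_sub, Prod.snd_sub]; ring
  have h2 := congrArg (fun x : ℝ => (x : ℂ)) this
  simp only [Complex.ofReal_add] at h2
  linear_combination (ww c (-k) * ww c m * ww c (k - m)) * h2

lemma HH_sw (c : Coef) (p) : HH c (sw2 p) = - HH c p := by
  obtain ⟨k, m⟩ := p
  simp only [HH, sw2, Equiv.coe_fn_mk]
  have : (nr (m - k) ^ 2 * nr (m - k - m) ^ 2 * JJ m (m - k) : ℝ)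
      = - (nr k ^ 2 * nr (k - m) ^ 2 * JJ m k) := by
    rw [nr_sq, nr_sq, nr_sq, nr_sq]; unfold JJ
    push_cast [Prod.fst_sub, Prod.snd_sub]; ring
  rw [this, neg_sub, show m - k - m = -k by abel, Complex.ofReal_neg]
  ring

lemma GG_tsum {c : Coef} (hr : IsReal c) (hc : FinH 2 c) : HasSum (GG c) 0 := by
  have hG : Summable (GG c) := (gdom_summable hr hc).of_norm_bounded (GG_le c)
  have hH : Summable (HH c) := (gdom_summable hr hc).of_norm_bounded (HH_le c)
  have h2 : ∑' p, HH c p = 0 := by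
    have e := sw2.tsum_eq (HH c)
    simp only [HH_sw, tsum_neg] at e
    exact CharZero.neg_eq_self_iff.1 e
  have e1 := sw1.tsum_eq (GG c)
  have e2 := sw1.tsum_eq (HH c)
  have hG' : Summable fun p => GG c (sw1 p) := sw1.summable_iff.2 hG
  have hH' : Summable fun p => HH c (sw1 p) := sw1.summable_iff.2 hH
  have h3 : ∑' p, (GG c p + GG c (sw1 p)) = ∑' p, (HH c p + HH c (sw1 p)) :=
    tsum_congr (GG_sw c)
  rw [hG.tsum_add hG', hH.tsum_add hH', e1, e2, h2] at h3
  have h4 : ∑' p, GG c p = 0 := by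
    have : 2 * ∑' p, GG c p = 0 := by linear_combination h3
    simpa using this
  rw [← h4]; exact hG.hasSum

lemma GG_Bc {c : Coef} (hr : IsReal c) (k : Freq) :
    ((lam k : ℝ) : ℂ) * ((starRingEnd ℂ) (c k) * Bc c c k) =
      (-(8 * (Real.pi : ℂ) ^ 3 * Complex.I)) * ∑' m, GG c (k.1, m) := by
  have hk := (nr_pos k.2).ne'
  have hk' : ((nr k.1 : ℝ) : ℂ) ≠ 0 := by exact_mod_cast hk
  have hc : (starRingEnd ℂ) (c k) = - ex c (-k.1) := by
    have h1 : ex c (-k.1) = c (fneg k) := ex_freq c (fneg k)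
    rw [h1, hr k, neg_neg]
  have hl : lam k = 4 * Real.pi ^ 2 * nr k.1 ^ 2 := by rw [nr_sq]; rfl
  rw [Bc_eq, hc, hl, ← tsum_mul_left, ← tsum_mul_left, ← tsum_mul_left, ← tsum_mul_left]
  refine tsum_congr fun m => ?_
  simp only [GG, bt, ww, nr_neg]
  push_cast
  field_simp
  ring

/-- The enstrophy cancellation. -/
lemma enstrophy {c : Coef} (hr : IsReal c) (hc : FinH 2 c) :
    HasSum (fun k : Freq => ((lam k : ℝ) : ℂ) * ((starRingEnd ℂ) (c k) * Bc c c k)) 0 := by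
  have h := GG_tsum hr hc
  have h1 : HasSum (fun k => ∑' m, GG c (k, m)) 0 :=
    h.prod_fiberwise fun k => (h.summable.prod_factor k).hasSum
  have h2 : HasSum (fun k : Freq => ∑' m, GG c (k.1, m)) 0 := by
    refine (hasSum_subtype_iff_of_support_subset (s := {n : ℤ × ℤ | n ≠ 0}) ?_).2 h1
    intro k hk h0
    apply hk
    simp [h0, GG, ww]
  have h3 := h2.mul_left (-(8 * (Real.pi : ℂ) ^ 3 * Complex.I))
  rw [mul_zero] at h3
  refine h3.congr_fun ?_ 
  intro k; exact GG_Bc hr k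

end Cancellation

section Energy
open scoped ENNReal

lemma ftc_le {g g' φ : ℝ → ℝ} {a b : ℝ} (hab : a ≤ b) (hc : ContinuousOn g (Icc a b))
    (hd : ∀ x ∈ Ioo a b, HasDerivAt g (g' x) x) (hφ : IntegrableOn φ (Ioc a b))
    (h : ∀ᵐ x ∂volume.restrict (Ioc a b), g' x ≤ φ x) : g b - g a ≤ ∫ x in a..b, φ x := by
  have hae : (fun x => max (φ x) (g' x)) =ᵐ[volume.restrict (Ioc a b)] φ := by
    filter_upwards [h] with x hx using max_eq_left hx
  have h1 := intervalIntegral.sub_le_integral_of_hasDeriv_right_of_le hab hc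
    (fun x hx => (hd x hx).hasDerivWithinAt) (φ := fun x => max (φ x) (g' x))
    (by rw [integrableOn_Icc_iff_integrableOn_Ioc]; exact hφ.congr hae.symm)
    (fun x _ => le_max_right _ _)
  refine h1.trans (le_of_eq ?_)
  rw [intervalIntegral.integral_of_le hab, intervalIntegral.integral_of_le hab]
  exact integral_congr_ae hae

lemma coef_cont {α T : ℝ} {u : ℝ → Coef} (hc : ContH α T u)
    (hfin : ∀ t ∈ Icc (0:ℝ) T, FinH α (u t)) (k : Freq) :
    ContinuousOn (fun t => u t k) (Icc 0 T) := by
  rw [Metric.continuousOn_iff]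
  intro t ht ε hε
  have hl : 0 < lam k ^ α := Real.rpow_pos_of_pos (lam_pos k) α
  obtain ⟨δ, hδ, h⟩ := hc t ht (ε * Real.sqrt (lam k ^ α)) (by positivity)
  refine ⟨δ, hδ, fun s hs hst => ?_⟩
  have h1 := h s hs (by rwa [Real.dist_eq] at hst)
  have h2 := sum_le_hSq (finH_sub (hfin s hs) (hfin t ht)) {k}
  rw [Finset.sum_singleton] at h2
  rw [dist_eq_norm]
  unfold hN at h1
  rw [Real.sqrt_lt' (by positivity), mul_pow, Real.sq_sqrt hl.le] at h1
  have h3 : ‖(u s - u t) k‖ ^ 2 < ε ^ 2 := by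
    by_contra hcon
    push Not at hcon
    nlinarith
  exact lt_of_pow_lt_pow_left₀ 2 hε.le h3

/-- Truncated squared Sobolev norm. -/
def EF (s : ℝ) (F : Finset Freq) (c : Coef) : ℝ := ∑ k ∈ F, lam k ^ s * ‖c k‖ ^ 2

lemma EF_nonneg (s F c) : 0 ≤ EF s F c := Finset.sum_nonneg fun k _ => term_nonneg s c k

lemma EF_mono {F G : Finset Freq} (h : F ⊆ G) (s c) : EF s F c ≤ EF s G c :=
  Finset.sum_le_sum_of_subset_of_nonneg h fun k _ _ => term_nonneg s c k

lemma EF_cont {T : ℝ} {u : ℝ → Coef} (h : ∀ k, ContinuousOn (fun t => u t k) (Icc 0 T)) (s F) :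
    ContinuousOn (fun t => EF s F (u t)) (Icc 0 T) := by
  unfold EF
  exact continuousOn_finsetSum _ fun k _ => (continuousOn_const.mul ((h k).norm.pow 2))

lemma EF_deriv {u : ℝ → Coef} {v : Coef} {t : ℝ}
    (h : ∀ k, HasDerivAt (fun s => u s k) (v k) t) (s F) :
    HasDerivAt (fun t => EF s F (u t)) (∑ k ∈ F, lam k ^ s * (2 * inner ℝ (u t k) (v k))) t := by
  unfold EF
  exact HasDerivAt.fun_sum fun k _ => ((h k).norm_sq).const_mul _

lemma EF_int {T : ℝ} {u : ℝ → Coef} (h : ∀ k, ContinuousOn (fun t => u t k) (Icc 0 T)) (s F)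
    {t : ℝ} (ht : t ∈ Icc 0 T) : IntegrableOn (fun t => EF s F (u t)) (Ioc 0 t) := by
  have : IntegrableOn (fun t => EF s F (u t)) (Icc 0 T) :=
    (EF_cont h s F).integrableOn_compact isCompact_Icc
  exact this.mono_set ((Ioc_subset_Ioc_right ht.2).trans Ioc_subset_Icc_self)

lemma NS_fin {ν T : ℝ} {f θ : Coef} {u : ℝ → Coef} (hsol : IsNSSol ν f T θ u) (hθ : FinH 1 θ) :
    ∀ t ∈ Icc (0:ℝ) T, FinH 1 (u t) := by
  intro t ht
  rcases ht.1.eq_or_lt with h | h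
  · rw [← h, hsol.init]; exact hθ
  · exact (hsol.memL2H2.1 t ⟨h, ht.2⟩).2.mono (by norm_num)

lemma NS_cont {ν T : ℝ} {f θ : Coef} {u : ℝ → Coef} (hsol : IsNSSol ν f T θ u) (hθ : FinH 1 θ)
    (k : Freq) : ContinuousOn (fun t => u t k) (Icc 0 T) :=
  coef_cont hsol.contH1 (NS_fin hsol hθ) k

lemma young_term {ν : ℝ} (hν : 0 < ν) (s : ℝ) (k : Freq) (z w : ℂ) :
    lam k ^ s * (2 * (‖z‖ * ‖w‖)) ≤ ν / 2 * (lam k ^ (s+1) * ‖z‖ ^ 2)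
      + 2 / ν * (lam k ^ (s - 1) * ‖w‖ ^ 2) := by
  have hl := lam_pos k
  have e1 : lam k ^ (s+1) = lam k ^ (s-1) * lam k ^ 2 := by
    rw [← Real.rpow_natCast, ← Real.rpow_add hl]; congr 1; push_cast; ring
  have e2 : lam k ^ s = lam k ^ (s-1) * lam k := by
    conv_rhs => rw [← Real.rpow_one (lam k), ← Real.rpow_mul hl.le, ← Real.rpow_add hl]
    congr 1; ring
  rw [e1, e2]
  have hp : 0 < lam k ^ (s-1) := Real.rpow_pos_of_pos hl _
  have key : lam k * (2 * (‖z‖ * ‖w‖)) ≤ ν / 2 * (lam k ^ 2 * ‖z‖ ^ 2) + 2 / ν * ‖w‖ ^ 2 := by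
    have : 0 ≤ (ν * lam k * ‖z‖ - 2 * ‖w‖) ^ 2 / (2 * ν) := by positivity
    have e : (ν * lam k * ‖z‖ - 2 * ‖w‖) ^ 2 / (2 * ν) =
      ν / 2 * (lam k ^ 2 * ‖z‖ ^ 2) + 2 / ν * ‖w‖ ^ 2 - lam k * (2 * (‖z‖ * ‖w‖)) := by
      field_simp; ring
    linarith
  nlinarith [mul_le_mul_of_nonneg_left key hp.le]

lemma energy {ν T : ℝ} {f θ : Coef} {u : ℝ → Coef} (hν : 0 < ν) (hsol : IsNSSol ν f T θ u)
    (hθ : FinH 1 θ) (s : ℝ) (hf : FinH (s-1) f) (F : Finset Freq) {φ : ℝ → ℝ}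
    (hφi : IntegrableOn φ (Ioc 0 T)) (hφ0 : ∀ t, 0 ≤ φ t)
    (h : ∀ᵐ t ∂volume.restrict (Ioc 0 T),
      -(∑ k ∈ F, lam k ^ s * (2 * inner ℝ (u t k) (Bc (u t) (u t) k))) ≤
        ν / 2 * EF (s+1) F (u t) + φ t) (t : ℝ) (ht : t ∈ Icc 0 T) :
    EF s F (u t) + ν * ∫ τ in (0:ℝ)..t, EF (s+1) F (u τ) ≤
      EF s F θ + 2 / ν * hSq (s-1) f * T + ∫ τ in (0:ℝ)..T, φ τ := by
  have hT : 0 ≤ T := ht.1.trans ht.2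
  have hcont := NS_cont hsol hθ
  have hsub : Ioc 0 t ⊆ Ioc 0 T := Ioc_subset_Ioc_right ht.2
  have hi1 := EF_int hcont (s+1) F ht
  have hi2 : IntegrableOn φ (Ioc 0 t) := hφi.mono_set hsub
  have hi3 : IntegrableOn (fun _ : ℝ => 2 / ν * hSq (s-1) f) (Ioc 0 t) :=
    integrableOn_const (by simp)
  have key := ftc_le (g := fun t => EF s F (u t))
    (g' := fun t => ∑ k ∈ F, lam k ^ s * (2 * inner ℝ (u t k)
      (f k - ((ν * lam k : ℝ) : ℂ) * u t k - Bc (u t) (u t) k)))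
    (φ := fun τ => -ν * EF (s+1) F (u τ) + 2 / ν * hSq (s-1) f + φ τ) ht.1
    ((EF_cont hcont s F).mono (Icc_subset_Icc_right ht.2))
    (fun x hx => EF_deriv (fun k => hsol.deriv k x ⟨hx.1, hx.2.le.trans ht.2⟩) s F)
    (((hi1.const_mul _).add hi3).add hi2)
    (by
      filter_upwards [ae_mono (Measure.restrict_mono hsub le_rfl) h] with x hx
      have e1 : ∀ k, (inner ℝ (u x k) (f k - ((ν * lam k : ℝ) : ℂ) * u x k - Bc (u x) (u x) k) : ℝ)
          = inner ℝ (u x k) (f k) - ν * lam k * ‖u x k‖ ^ 2 -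
            inner ℝ (u x k) (Bc (u x) (u x) k) := by
        intro k
        have : ((ν * lam k : ℝ) : ℂ) * u x k = (ν * lam k) • u x k := by
          rw [Complex.real_smul]
        rw [inner_sub_right, inner_sub_right, this, inner_smul_right, real_inner_self_eq_norm_sq]
      have e2 : ∑ k ∈ F, lam k ^ s * (2 * inner ℝ (u x k)
          (f k - ((ν * lam k : ℝ) : ℂ) * u x k - Bc (u x) (u x) k)) =
          ∑ k ∈ F, lam k ^ s * (2 * inner ℝ (u x k) (f k)) - 2 * ν * EF (s+1) F (u x)
          - (∑ k ∈ F, lam k ^ s * (2 * inner ℝ (u x k) (Bc (u x) (u x) k))) := by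
        unfold EF
        rw [Finset.mul_sum, ← Finset.sum_sub_distrib, ← Finset.sum_sub_distrib]
        refine Finset.sum_congr rfl fun k _ => ?_
        rw [e1, Real.rpow_add (lam_pos k), Real.rpow_one]; ring
      have e3 : ∑ k ∈ F, lam k ^ s * (2 * inner ℝ (u x k) (f k)) ≤
          ν / 2 * EF (s+1) F (u x) + 2 / ν * hSq (s-1) f := by
        calc _ ≤ ∑ k ∈ F, (ν / 2 * (lam k ^ (s+1) * ‖u x k‖ ^ 2)
              + 2 / ν * (lam k ^ (s - 1) * ‖f k‖ ^ 2)) := by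
              refine Finset.sum_le_sum fun k _ => ?_
              refine le_trans ?_ (young_term hν s k (u x k) (f k))
              have := lam_pos k
              gcongr
              exact real_inner_le_norm _ _
          _ = ν / 2 * EF (s+1) F (u x) + 2 / ν * EF (s-1) F f := by
              rw [Finset.sum_add_distrib, ← Finset.mul_sum, ← Finset.mul_sum]; rfl
          _ ≤ _ := by
              gcongr
              exact sum_le_hSq hf F
      rw [e2]
      linarith)
  simp only [hsol.init] at key
  rw [intervalIntegral.integral_add, intervalIntegral.integral_add,
    intervalIntegral.integral_const_mul, intervalIntegral.integral_const] at key
  · have h1 : ∫ τ in (0:ℝ)..t, φ τ ≤ ∫ τ in (0:ℝ)..T, φ τ := by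
      rw [intervalIntegral.integral_of_le ht.1, intervalIntegral.integral_of_le hT]
      exact setIntegral_mono_set hφi (Filter.Eventually.of_forall hφ0)
        (Filter.Eventually.of_forall hsub)
    have h2 : (t - 0) • (2 / ν * hSq (s-1) f) ≤ 2 / ν * hSq (s-1) f * T := by
      rw [smul_eq_mul, sub_zero, mul_comm]
      have := hSq_nonneg (s-1) f
      gcongr
      exact ht.2
    linarith
  · exact (intervalIntegrable_iff_integrableOn_Ioc_of_le ht.1).2 (hi1.const_mul _)
  · exact (intervalIntegrable_iff_integrableOn_Ioc_of_le ht.1).2 hi3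
  · exact (intervalIntegrable_iff_integrableOn_Ioc_of_le ht.1).2 ((hi1.const_mul _).add hi3)
  · exact (intervalIntegrable_iff_integrableOn_Ioc_of_le ht.1).2 hi2

lemma ofReal_EF (s F) (c : Coef) :
    ENNReal.ofReal (EF s F c) = ∑ k ∈ F, ENNReal.ofReal (lam k ^ s * ‖c k‖ ^ 2) :=
  ENNReal.ofReal_sum_of_nonneg fun k _ => term_nonneg s c k

lemma term_meas {T : ℝ} {u : ℝ → Coef} (h : ∀ k, ContinuousOn (fun t => u t k) (Icc 0 T)) (s : ℝ)
    (k : Freq) : AEMeasurable (fun t => ENNReal.ofReal (lam k ^ s * ‖u t k‖ ^ 2))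
      (volume.restrict (Ioc 0 T)) := by
  apply AEMeasurable.ennreal_ofReal
  have : ContinuousOn (fun t => lam k ^ s * ‖u t k‖ ^ 2) (Ioc 0 T) :=
    (continuousOn_const.mul ((h k).norm.pow 2)).mono Ioc_subset_Icc_self
  exact this.aemeasurable measurableSet_Ioc

lemma eH_meas {T : ℝ} {u : ℝ → Coef} (h : ∀ k, ContinuousOn (fun t => u t k) (Icc 0 T)) (s : ℝ) :
    AEMeasurable (fun t => eH s (u t)) (volume.restrict (Ioc 0 T)) := by
  simp only [eH_eq]
  exact AEMeasurable.tsum (term_meas h s)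

lemma energy_sup {ν T M : ℝ} {u : ℝ → Coef} (hν : 0 < ν) (hT : 0 ≤ T)
    (hcont : ∀ k, ContinuousOn (fun t => u t k) (Icc 0 T)) (s : ℝ)
    (h : ∀ F : Finset Freq, ∀ t ∈ Icc (0:ℝ) T,
      EF s F (u t) + ν * ∫ τ in (0:ℝ)..t, EF (s+1) F (u τ) ≤ M) :
    (∀ t ∈ Icc (0:ℝ) T, eH s (u t) ≤ ENNReal.ofReal M) ∧
      ∫⁻ t in Ioc 0 T, eH (s+1) (u t) ≤ ENNReal.ofReal (M / ν) := by
  constructor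
  · intro t ht
    rw [eH_eq, ENNReal.tsum_eq_iSup_sum]
    refine iSup_le fun F => ?_
    rw [← ofReal_EF]
    apply ENNReal.ofReal_le_ofReal
    have h1 := h F t ht
    have h2 : 0 ≤ ∫ τ in (0:ℝ)..t, EF (s+1) F (u τ) :=
      intervalIntegral.integral_nonneg ht.1 fun τ _ => EF_nonneg _ _ _
    nlinarith [mul_nonneg hν.le h2]
  · simp only [eH_eq]
    rw [lintegral_tsum (term_meas hcont (s+1)), ENNReal.tsum_eq_iSup_sum]
    refine iSup_le fun F => ?_
    rw [← lintegral_finsetSum' _ fun k _ => term_meas hcont (s+1) k]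
    simp only [← ofReal_EF]
    have hTm : T ∈ Icc (0:ℝ) T := ⟨hT, le_rfl⟩
    rw [← ofReal_integral_eq_lintegral_ofReal (EF_int hcont (s+1) F hTm)
      (Filter.Eventually.of_forall fun τ => EF_nonneg _ _ _)]
    apply ENNReal.ofReal_le_ofReal
    have h1 := h F T hTm
    rw [intervalIntegral.integral_of_le hT] at h1
    rw [le_div_iff₀ hν]
    nlinarith [EF_nonneg s F (u T)]

end Energy

section Unif
open scoped ENNReal

lemma sup_bound {α T : ℝ} {u : ℝ → Coef} (hc : ContH α T u)
    (hfin : ∀ t ∈ Icc (0:ℝ) T, FinH α (u t)) :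
    ∃ M : ℝ≥0∞, M ≠ ⊤ ∧ ∀ t ∈ Icc (0:ℝ) T, eH α (u t) ≤ M := by
  refine (isCompact_Icc (a := (0:ℝ)) (b := T)).induction_on
    (p := fun S => ∃ M : ℝ≥0∞, M ≠ ⊤ ∧ ∀ t ∈ S, eH α (u t) ≤ M) ?_ ?_ ?_ ?_
  · exact ⟨0, by simp, by simp⟩
  · rintro S S' hS ⟨M, hM, h⟩
    exact ⟨M, hM, fun t ht => h t (hS ht)⟩
  · rintro S S' ⟨M, hM, h⟩ ⟨M', hM', h'⟩
    refine ⟨M + M', by finiteness, ?_⟩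
    rintro t (ht | ht)
    · exact (h t ht).trans le_self_add
    · exact (h' t ht).trans le_add_self
  · intro t ht
    obtain ⟨δ, hδ, h⟩ := hc t ht 1 one_pos
    refine ⟨Icc 0 T ∩ Metric.ball t δ, Filter.inter_mem self_mem_nhdsWithin
      (mem_nhdsWithin_of_mem_nhds (Metric.ball_mem_nhds t hδ)), 2 * 1 + 2 * eH α (u t), ?_, ?_⟩
    · have := (finH_iff _ _).1 (hfin t ht)
      finiteness
    · rintro s ⟨hs, hst⟩
      refine (eH_sub α (u s) (u t)).trans ?_
      gcongr
      rw [eH_of_fin (finH_sub (hfin s hs) (hfin t ht)), ← ENNReal.ofReal_one]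
      apply ENNReal.ofReal_le_ofReal
      have h1 := h s hs (by rwa [Metric.mem_ball, Real.dist_eq] at hst)
      unfold hN at h1
      rw [Real.sqrt_lt' one_pos] at h1
      linarith

lemma Bc_meas {ν T : ℝ} {f θ : Coef} {u : ℝ → Coef} (hsol : IsNSSol ν f T θ u)
    (hθ : FinH 1 θ) (k : Freq) :
    AEStronglyMeasurable (fun t => Bc (u t) (u t) k) (volume.restrict (Ioc 0 T)) := by
  have h1 : AEStronglyMeasurable (fun t => u t k) (volume.restrict (Ioc 0 T)) :=
    ((NS_cont hsol hθ k).mono Ioc_subset_Icc_self).aestronglyMeasurable measurableSet_Ioc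
  have h2 : AEStronglyMeasurable (deriv fun t => u t k) (volume.restrict (Ioc 0 T)) :=
    (measurable_deriv _).aestronglyMeasurable
  have h3 : AEStronglyMeasurable (fun t => f k - ((ν * lam k : ℝ) : ℂ) * u t k
      - deriv (fun t => u t k) t) (volume.restrict (Ioc 0 T)) :=
    (aestronglyMeasurable_const.sub (h1.const_mul _)).sub h2
  refine h3.congr ?_
  filter_upwards [ae_restrict_mem measurableSet_Ioc] with t ht
  rw [(hsol.deriv k t ht).deriv]; ring

/-- The (doubled) truncated enstrophy production. -/
def RF (F : Finset Freq) (c : Coef) : ℝ :=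
  ∑ k ∈ F, lam k ^ (1:ℝ) * (2 * inner ℝ (c k) (Bc c c k))

lemma RF_lim {c : Coef} (hr : IsReal c) (hc : FinH 2 c) :
    Filter.Tendsto (fun F => |RF F c|) Filter.atTop (nhds 0) := by
  have h := (Complex.hasSum_re (enstrophy hr hc)).mul_left 2
  have h2 : Filter.Tendsto (fun F => RF F c) Filter.atTop (nhds (2 * (0:ℂ).re)) := by
    refine Filter.Tendsto.congr ?_ h
    intro F
    unfold RF
    refine Finset.sum_congr rfl fun k _ => ?_
    simp only [Complex.inner, Real.rpow_one, Complex.re_ofReal_mul]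
    rw [mul_comm (Bc c c k)]; ring
  simpa using h2.abs

lemma RF_le {K : ℝ≥0∞} (hK : K ≠ ⊤) {c : Coef} (hc : FinH 2 c)
    (h : eH 0 (Bc c c) ≤ K * eH 2 c) (F : Finset Freq) :
    |RF F c| ≤ (1 + K.toReal) * hSq 2 c := by
  have h2 : FinH 0 (Bc c c) := by
    rw [finH_iff]; have := (finH_iff _ _).1 hc
    exact ne_top_of_le_ne_top (by finiteness) h
  have h3 : hSq 0 (Bc c c) ≤ K.toReal * hSq 2 c := by
    rw [hSq_eq, hSq_eq, ← ENNReal.toReal_mul]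
    have := (finH_iff _ _).1 hc
    exact ENNReal.toReal_mono (by finiteness) h
  calc |RF F c| ≤ ∑ k ∈ F, |lam k ^ (1:ℝ) * (2 * inner ℝ (c k) (Bc c c k))| :=
        Finset.abs_sum_le_sum_abs _ _
    _ ≤ ∑ k ∈ F, ((lam k ^ (2:ℝ) * ‖c k‖ ^ 2) + lam k ^ (0:ℝ) * ‖Bc c c k‖ ^ 2) := by
        refine Finset.sum_le_sum fun k _ => ?_
        have hy := young_term two_pos 1 k (c k) (Bc c c k)
        have e1 : (1:ℝ) + 1 = 2 := by norm_num
        have e2 : (1:ℝ) - 1 = 0 := by norm_num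
        rw [e1, e2, div_self two_ne_zero, one_mul, one_mul] at hy
        refine le_trans ?_ hy
        have := Real.rpow_pos_of_pos (lam_pos k) 1
        rw [abs_mul, abs_mul, abs_of_pos this, abs_of_pos two_pos]
        gcongr
        exact abs_real_inner_le_norm _ _
    _ = ∑ k ∈ F, (lam k ^ (2:ℝ) * ‖c k‖ ^ 2) + ∑ k ∈ F, lam k ^ (0:ℝ) * ‖Bc c c k‖ ^ 2 :=
        Finset.sum_add_distrib
    _ ≤ hSq 2 c + hSq 0 (Bc c c) := add_le_add (sum_le_hSq hc F) (sum_le_hSq h2 F)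
    _ ≤ _ := by linarith

lemma base_energy {ν T : ℝ} {f θ : Coef} {u : ℝ → Coef} (hν : 0 < ν) (hT : 0 ≤ T)
    (hsol : IsNSSol ν f T θ u) (hθ : FinH 1 θ) (hf : FinH 0 f) :
    ∀ F : Finset Freq, ∀ t ∈ Icc (0:ℝ) T,
      EF 1 F (u t) + ν * ∫ τ in (0:ℝ)..t, EF (1+1) F (u τ) ≤ hSq 1 θ + 2 / ν * hSq 0 f * T := by
  obtain ⟨M, hM, hMu⟩ := sup_bound hsol.contH1 (NS_fin hsol hθ)
  obtain ⟨K, hK, hKB⟩ := Bc_tame (s := 1) zero_le_one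
  have hcont := NS_cont hsol hθ
  have hKM : K * M ≠ ⊤ := by finiteness
  have hb : ∀ t ∈ Ioc 0 T, ∀ F, |RF F (u t)| ≤ (1 + (K * M).toReal) * hSq 2 (u t) := by
    intro t ht F
    refine RF_le hKM (hsol.memL2H2.1 t ht).2 ?_ F
    have h1 := hKB (u t)
    rw [sub_self] at h1
    refine h1.trans ?_
    rw [mul_assoc]
    gcongr
    · exact hMu t (Ioc_subset_Icc_self ht)
    · exact eH_mono (by norm_num) _
  have hbi : IntegrableOn (fun t => (1 + (K * M).toReal) * hSq 2 (u t)) (Ioc 0 T) :=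
    hsol.memL2H2.2.const_mul _
  have hmeas : ∀ F, AEStronglyMeasurable (fun t => |RF F (u t)|) (volume.restrict (Ioc 0 T)) := by
    intro F
    have h0 : AEStronglyMeasurable (fun t => RF F (u t)) (volume.restrict (Ioc 0 T)) := by
      unfold RF
      refine Finset.aestronglyMeasurable_fun_sum _ fun k _ => ?_
      have h1 : AEStronglyMeasurable (fun t => u t k) (volume.restrict (Ioc 0 T)) :=
        ((hcont k).mono Ioc_subset_Icc_self).aestronglyMeasurable measurableSet_Ioc
      exact ((h1.inner (Bc_meas hsol hθ k)).const_mul _).const_mul _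
    exact h0.norm
  have hInt : ∀ F, IntegrableOn (fun t => |RF F (u t)|) (Ioc 0 T) := by
    intro F
    refine hbi.mono' (hmeas F) ?_
    filter_upwards [ae_restrict_mem measurableSet_Ioc] with t ht
    rw [Real.norm_eq_abs, abs_abs]; exact hb t ht F
  have hlim : Filter.Tendsto (fun F => ∫ t in Ioc 0 T, |RF F (u t)|) Filter.atTop (nhds 0) := by
    have := tendsto_integral_filter_of_dominated_convergence (μ := volume.restrict (Ioc 0 T))
      (l := (Filter.atTop : Filter (Finset Freq))) (F := fun F t => |RF F (u t)|)
      (f := fun _ => (0:ℝ)) _ (Filter.Eventually.of_forall hmeas)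
      (Filter.Eventually.of_forall fun F => by
        filter_upwards [ae_restrict_mem measurableSet_Ioc] with t ht
        rw [Real.norm_eq_abs, abs_abs]; exact hb t ht F) hbi
      (by
        filter_upwards [ae_restrict_mem measurableSet_Ioc] with t ht
        exact RF_lim (hsol.memL2H2.1 t ht).1 (hsol.memL2H2.1 t ht).2)
    simpa using this
  intro F0 t ht
  have hl2 : Filter.Tendsto (fun F => hSq 1 θ + 2 / ν * hSq 0 f * T
      + ∫ t in Ioc 0 T, |RF F (u t)|) Filter.atTop (nhds (hSq 1 θ + 2 / ν * hSq 0 f * T + 0)) :=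
    tendsto_const_nhds.add hlim
  rw [add_zero] at hl2
  refine ge_of_tendsto hl2 ?_
  filter_upwards [Filter.eventually_ge_atTop F0] with F hF
  have he := energy hν hsol hθ 1 (by simpa using hf) F (hInt F) (fun t => abs_nonneg _)
    (Filter.Eventually.of_forall fun t => by
      have h1 := neg_le_abs (RF F (u t))
      have h2 : 0 ≤ ν / 2 * EF (1+1) F (u t) := mul_nonneg (by positivity) (EF_nonneg _ _ _)
      unfold RF at h1 ⊢
      linarith) t ht
  rw [intervalIntegral.integral_of_le hT, sub_self] at he
  have h1 := EF_mono hF 1 (u t)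
  have h2 : EF 1 F θ ≤ hSq 1 θ := sum_le_hSq hθ F
  have h3 : ∫ τ in (0:ℝ)..t, EF (1+1) F0 (u τ) ≤ ∫ τ in (0:ℝ)..t, EF (1+1) F (u τ) := by
    refine intervalIntegral.integral_mono_on ht.1 ?_ ?_ fun τ _ => EF_mono hF _ _
    · exact (intervalIntegrable_iff_integrableOn_Ioc_of_le ht.1).2 (EF_int hcont _ _ ht)
    · exact (intervalIntegrable_iff_integrableOn_Ioc_of_le ht.1).2 (EF_int hcont _ _ ht)
  have h4 := mul_le_mul_of_nonneg_left h3 hν.le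
  exact (add_le_add h1 h4).trans (he.trans (by gcongr))

/-- Uniform a priori bounds at regularity `r` for initial conditions bounded in `Ḣ^σ`. -/
def UB (ν T : ℝ) (f : Coef) (σ B r : ℝ) : Prop :=
  ∃ M : ℝ≥0∞, M ≠ ⊤ ∧ ∀ (θ : Coef) (u : ℝ → Coef), FinH σ θ → hSq σ θ ≤ B → IsNSSol ν f T θ u →
    (∀ t ∈ Icc (0:ℝ) T, eH r (u t) ≤ M) ∧ ∫⁻ t in Ioc 0 T, eH (r+1) (u t) ≤ M

lemma hSq_mono {s r : ℝ} (h : s ≤ r) {c : Coef} (hc : FinH r c) : hSq s c ≤ hSq r c := by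
  rw [hSq_eq, hSq_eq]
  exact ENNReal.toReal_mono ((finH_iff _ _).1 hc) (eH_mono h c)

lemma UB_of_energy {ν T : ℝ} {f : Coef} {σ B r M : ℝ} (hν : 0 < ν) (hT : 0 ≤ T) (hσ : 1 ≤ σ)
    (h : ∀ (θ : Coef) (u : ℝ → Coef), FinH σ θ → hSq σ θ ≤ B → IsNSSol ν f T θ u →
      ∀ F : Finset Freq, ∀ t ∈ Icc (0:ℝ) T,
      EF r F (u t) + ν * ∫ τ in (0:ℝ)..t, EF (r+1) F (u τ) ≤ M) : UB ν T f σ B r := by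
  refine ⟨ENNReal.ofReal M + ENNReal.ofReal (M / ν), by finiteness, fun θ u hθ hB hsol => ?_⟩
  obtain ⟨h1, h2⟩ := energy_sup hν hT (NS_cont hsol (hθ.mono hσ)) r (h θ u hθ hB hsol)
  exact ⟨fun t ht => (h1 t ht).trans le_self_add, h2.trans le_add_self⟩

lemma UB_one {ν T : ℝ} {f : Coef} {σ B : ℝ} (hν : 0 < ν) (hT : 0 ≤ T) (hσ : 1 ≤ σ)
    (hf : FinH (σ - 1) f) : UB ν T f σ B 1 := by
  refine UB_of_energy (M := B + 2 / ν * hSq 0 f * T) hν hT hσ fun θ u hθ hB hsol F t ht => ?_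
  have := base_energy hν hT hsol (hθ.mono hσ) (hf.mono (by linarith)) F t ht
  have h2 := hSq_mono hσ hθ
  linarith

lemma UB_step {ν T : ℝ} {f : Coef} {σ B r : ℝ} (hν : 0 < ν) (hT : 0 ≤ T) (hσ : 1 ≤ σ)
    (hf : FinH (σ - 1) f) (hr0 : 0 ≤ r) (hr : r ≤ σ)
    (h : ∃ M : ℝ≥0∞, M ≠ ⊤ ∧ ∀ (θ : Coef) (u : ℝ → Coef), FinH σ θ → hSq σ θ ≤ B →
      IsNSSol ν f T θ u → ∫⁻ t in Ioc 0 T, eH r (u t) * eH (3/2) (u t) ≤ M) :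
    UB ν T f σ B r := by
  obtain ⟨M, hM, h⟩ := h
  obtain ⟨K, hK, hKB⟩ := Bc_tame hr0
  have hf' : FinH (r-1) f := hf.mono (by linarith)
  refine UB_of_energy (M := B + 2 / ν * hSq (r-1) f * T + 2 / ν * (K * M).toReal)
    hν hT hσ fun θ u hθ hB hsol F t ht => ?_
  have hcont := NS_cont hsol (hθ.mono hσ)
  set g : ℝ → ℝ≥0∞ := fun t => K * (eH r (u t) * eH (3/2) (u t)) with hg
  have hgm : AEMeasurable g (volume.restrict (Ioc 0 T)) :=
    ((eH_meas hcont r).mul (eH_meas hcont (3/2))).const_mul _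
  have hgi : ∫⁻ t in Ioc 0 T, g t ≤ K * M := by
    have e : ∫⁻ t in Ioc 0 T, g t = K * ∫⁻ t in Ioc 0 T, eH r (u t) * eH (3/2) (u t) :=
      lintegral_const_mul'' _ ((eH_meas hcont r).mul (eH_meas hcont (3/2)))
    rw [e]
    gcongr
    exact h θ u hθ hB hsol
  have hKM : K * M ≠ ⊤ := by finiteness
  have hgt : ∫⁻ t in Ioc 0 T, g t ≠ ⊤ := ne_top_of_le_ne_top hKM hgi
  have hInt : Integrable (fun t => (g t).toReal) (volume.restrict (Ioc 0 T)) :=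
    integrable_toReal_of_lintegral_ne_top hgm hgt
  have hlt : ∀ᵐ t ∂volume.restrict (Ioc 0 T), g t < ⊤ := ae_lt_top' hgm hgt
  have he := energy hν hsol (hθ.mono hσ) r hf' F (φ := fun t => 2 / ν * (g t).toReal)
    (hInt.const_mul _) (fun t => by positivity)
    (by
      filter_upwards [hlt] with x hx
      calc -(∑ k ∈ F, lam k ^ r * (2 * inner ℝ (u x k) (Bc (u x) (u x) k)))
          = ∑ k ∈ F, lam k ^ r * (2 * -inner ℝ (u x k) (Bc (u x) (u x) k)) := by
            rw [← Finset.sum_neg_distrib]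
            exact Finset.sum_congr rfl fun k _ => by ring
        _ ≤ ∑ k ∈ F, (ν / 2 * (lam k ^ (r+1) * ‖u x k‖ ^ 2)
              + 2 / ν * (lam k ^ (r - 1) * ‖Bc (u x) (u x) k‖ ^ 2)) := by
            refine Finset.sum_le_sum fun k _ => ?_
            refine le_trans ?_ (young_term hν r k (u x k) (Bc (u x) (u x) k))
            have := lam_pos k
            gcongr
            exact (neg_le_abs _).trans (abs_real_inner_le_norm _ _)
        _ = ν / 2 * EF (r+1) F (u x) + 2 / ν * EF (r-1) F (Bc (u x) (u x)) := by
            rw [Finset.sum_add_distrib, ← Finset.mul_sum, ← Finset.mul_sum]; rfl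
        _ ≤ _ := by
            gcongr
            rw [← ENNReal.ofReal_le_iff_le_toReal hx.ne]
            exact (sum_le_eH _ _ F).trans (hKB (u x))) t ht
  rw [intervalIntegral.integral_of_le hT, integral_const_mul,
    integral_toReal hgm hlt] at he
  have h1 : (∫⁻ t in Ioc 0 T, g t).toReal ≤ (K * M).toReal := ENNReal.toReal_mono hKM hgi
  have h2 : EF r F θ ≤ B := (sum_le_hSq (hθ.mono hr) F).trans ((hSq_mono hr hθ).trans hB)
  have h3 : 2 / ν * (∫⁻ t in Ioc 0 T, g t).toReal ≤ 2 / ν * (K * M).toReal := by gcongr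
  linarith

lemma UB_three_half {ν T : ℝ} {f : Coef} {σ B : ℝ} (hν : 0 < ν) (hT : 0 ≤ T) (hσ : 2 ≤ σ)
    (hf : FinH (σ - 1) f) : UB ν T f σ B (3/2) := by
  refine UB_step hν hT (by linarith) hf (by norm_num) (by linarith) ?_
  obtain ⟨M, hM, h⟩ := UB_one (B := B) hν hT (by linarith) hf
  refine ⟨M * M, by finiteness, fun θ u hθ hB hsol => ?_⟩
  obtain ⟨h1, h2⟩ := h θ u hθ hB hsol
  have hcont := NS_cont hsol (hθ.mono (by linarith))
  calc ∫⁻ t in Ioc 0 T, eH (3/2) (u t) * eH (3/2) (u t)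
      ≤ ∫⁻ t in Ioc 0 T, M * eH (1+1) (u t) := by
        refine setLIntegral_mono_ae' measurableSet_Ioc (Filter.Eventually.of_forall fun t ht => ?_)
        rw [← pow_two]
        refine (NN_interp (xn (u t))).trans ?_
        norm_num
        exact mul_le_mul' (h1 t (Ioc_subset_Icc_self ht)) le_rfl
    _ = M * ∫⁻ t in Ioc 0 T, eH (1+1) (u t) := lintegral_const_mul'' _ (eH_meas hcont _)
    _ ≤ M * M := by gcongr

lemma UB_nat {ν T : ℝ} {f : Coef} {σ B : ℝ} (hν : 0 < ν) (hT : 0 ≤ T) (hσ : 1 ≤ σ)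
    (hf : FinH (σ - 1) f) (n : ℕ) (hn : (n:ℝ) + 1 ≤ σ) : UB ν T f σ B (n + 1) := by
  induction n with
  | zero => simpa using UB_one hν hT hσ hf
  | succ n ih =>
    push_cast at hn ⊢
    have hn0 : (0:ℝ) ≤ n := n.cast_nonneg
    obtain ⟨M1, hM1, h1⟩ := ih (by linarith)
    obtain ⟨M2, hM2, h2⟩ := UB_three_half (B := B) hν hT (σ := σ) (by linarith) hf
    refine UB_step hν hT hσ hf (by linarith) hn ⟨M2 * M1, by finiteness, fun θ u hθ hB hsol => ?_⟩
    have hcont := NS_cont hsol (hθ.mono hσ)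
    calc ∫⁻ t in Ioc 0 T, eH ((n:ℝ) + 1 + 1) (u t) * eH (3/2) (u t)
        ≤ ∫⁻ t in Ioc 0 T, M2 * eH ((n:ℝ)+1+1) (u t) := by
          refine setLIntegral_mono_ae' measurableSet_Ioc
            (Filter.Eventually.of_forall fun t ht => ?_)
          rw [mul_comm]
          exact mul_le_mul' ((h2 θ u hθ hB hsol).1 t (Ioc_subset_Icc_self ht)) le_rfl
      _ = M2 * ∫⁻ t in Ioc 0 T, eH ((n:ℝ)+1+1) (u t) := lintegral_const_mul'' _ (eH_meas hcont _)
      _ ≤ M2 * M1 := mul_le_mul' le_rfl (h1 θ u hθ hB hsol).2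

lemma UB_int {ν T : ℝ} {f : Coef} (a : ℤ) {B : ℝ} (hν : 0 < ν) (hT : 0 ≤ T)
    (hf : FinH ((astar a : ℝ) - 1) f) : UB ν T f (astar a) B (max |(a:ℝ)| 1) := by
  unfold astar at *
  split_ifs at * with h
  · have h1 : |(a:ℝ)| ≤ 1 := by exact_mod_cast h
    rw [max_eq_right h1]
    refine UB_one hν hT ?_ hf
    push_cast; linarith [abs_nonneg (a:ℝ)]
  · push Not at h
    have h1 : 1 ≤ |(a:ℝ)| := by exact_mod_cast h.le
    rw [max_eq_left h1]
    have h2 : (((|a|.toNat - 1 : ℕ) : ℝ)) + 1 = |(a:ℝ)| := by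
      have : (((|a|.toNat - 1 : ℕ) : ℤ)) + 1 = |a| := by omega
      exact_mod_cast this
    have h3 := UB_nat (B := B) hν hT (σ := ((|a| : ℤ) : ℝ)) (by push_cast; exact h1) hf
      (|a|.toNat - 1) (by rw [h2]; push_cast; rfl)
    rwa [h2] at h3

end Unif

section Lin
open scoped ENNReal

lemma lin_deriv_bound {a : ℤ} {ν : ℝ} (hν : 0 < ν) {K M : ℝ≥0∞} (hK : K ≠ ⊤) (hM : M ≠ ⊤)
    {c d : Coef}
    (h : (∑' k : Freq, ENNReal.ofReal (lam k ^ (a:ℝ) * ‖d k‖ * (‖Bc c d k‖ + ‖Bc d c k‖))) ^ 2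
      ≤ K * (eH (max |(a:ℝ)| 1) c * eH (a + 1) d ^ 2))
    (hc : eH (max |(a:ℝ)| 1) c ≤ M) (hd : FinH ((a:ℝ) + 1) d) (F : Finset Freq) :
    -(∑ k ∈ F, lam k ^ (a:ℝ) * (2 * inner ℝ (d k)
      ((0:Coef) k - ((ν * lam k : ℝ) : ℂ) * d k - Bc c d k - Bc d c k)))
      ≤ (2 * ν + 2 * (K * M + 1).toReal) * hSq ((a:ℝ) + 1) d := by
  have hY := (finH_iff _ _).1 hd
  have h1 : (∑' k : Freq, ENNReal.ofReal (lam k ^ (a:ℝ) * ‖d k‖ * (‖Bc c d k‖ + ‖Bc d c k‖)))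
      ≤ (K * M + 1) * eH ((a:ℝ)+1) d := by
    have h2 : (∑' k : Freq, ENNReal.ofReal (lam k ^ (a:ℝ) * ‖d k‖ *
        (‖Bc c d k‖ + ‖Bc d c k‖))) ^ 2 ≤ ((K * M + 1) * eH ((a:ℝ)+1) d) ^ 2 := by
      refine h.trans ?_
      rw [mul_pow, ← mul_assoc]
      refine mul_le_mul' ?_ le_rfl
      calc _ ≤ K * M := mul_le_mul' le_rfl hc
        _ ≤ K * M + 1 := le_self_add
        _ = (K * M + 1) * 1 := (mul_one _).symm
        _ ≤ (K * M + 1) ^ 2 := by rw [pow_two]; exact mul_le_mul' le_rfl le_add_self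
    by_contra hcon
    push Not at hcon
    exact absurd h2 (not_le.2 (ENNReal.pow_lt_pow_left two_ne_zero hcon))
  have h3 : ∑ k ∈ F, lam k ^ (a:ℝ) * ‖d k‖ * (‖Bc c d k‖ + ‖Bc d c k‖)
      ≤ (K * M + 1).toReal * hSq ((a:ℝ)+1) d := by
    rw [hSq_eq, ← ENNReal.toReal_mul, ← ENNReal.ofReal_le_iff_le_toReal (by finiteness),
      ENNReal.ofReal_sum_of_nonneg]
    · exact (ENNReal.sum_le_tsum F).trans h1
    · intro k _
      have := lam_pos k
      positivity
  have h4 : EF ((a:ℝ)+1) F d ≤ hSq ((a:ℝ)+1) d := sum_le_hSq hd F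
  calc -(∑ k ∈ F, lam k ^ (a:ℝ) * (2 * inner ℝ (d k)
      ((0:Coef) k - ((ν * lam k : ℝ) : ℂ) * d k - Bc c d k - Bc d c k)))
      = ∑ k ∈ F, lam k ^ (a:ℝ) * (2 * -inner ℝ (d k)
      ((0:Coef) k - ((ν * lam k : ℝ) : ℂ) * d k - Bc c d k - Bc d c k)) := by
        rw [← Finset.sum_neg_distrib]
        exact Finset.sum_congr rfl fun k _ => by ring
    _ ≤ ∑ k ∈ F, (2 * ν * (lam k ^ ((a:ℝ)+1) * ‖d k‖ ^ 2)
        + 2 * (lam k ^ (a:ℝ) * ‖d k‖ * (‖Bc c d k‖ + ‖Bc d c k‖))) := by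
        refine Finset.sum_le_sum fun k _ => ?_
        have e : ((ν * lam k : ℝ) : ℂ) * d k = (ν * lam k) • d k := by rw [Complex.real_smul]
        have e0 : (0 : Coef) k = 0 := rfl
        rw [inner_sub_right, inner_sub_right, inner_sub_right, e, inner_smul_right,
          real_inner_self_eq_norm_sq, e0, inner_zero_right, Real.rpow_add (lam_pos k),
          Real.rpow_one]
        have p : 0 < lam k ^ (a:ℝ) := Real.rpow_pos_of_pos (lam_pos k) _
        have b1 := mul_le_mul_of_nonneg_left (real_inner_le_norm (d k) (Bc c d k)) p.le
        have b2 := mul_le_mul_of_nonneg_left (real_inner_le_norm (d k) (Bc d c k)) p.le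
        linarith
    _ = 2 * ν * EF ((a:ℝ)+1) F d
        + 2 * ∑ k ∈ F, lam k ^ (a:ℝ) * ‖d k‖ * (‖Bc c d k‖ + ‖Bc d c k‖) := by
        rw [Finset.sum_add_distrib, ← Finset.mul_sum, ← Finset.mul_sum]; rfl
    _ ≤ 2 * ν * hSq ((a:ℝ)+1) d + 2 * ((K * M + 1).toReal * hSq ((a:ℝ)+1) d) := by
        gcongr
    _ = _ := by ring

lemma lin_stab {a : ℤ} {T ν : ℝ} (hT : 0 < T) (hν : 0 < ν) {K M : ℝ≥0∞} (hK : K ≠ ⊤) (hM : M ≠ ⊤)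
    (h : ∀ c d : Coef, IsReal c →
      (∑' k : Freq, ENNReal.ofReal (lam k ^ (a:ℝ) * ‖d k‖ * (‖Bc c d k‖ + ‖Bc d c k‖))) ^ 2
      ≤ K * (eH (max |(a:ℝ)| 1) c * eH (a + 1) d ^ 2))
    {u U : ℝ → Coef} {ξ : Coef} (hu : ∀ t ∈ Icc (0:ℝ) T, eH (max |(a:ℝ)| 1) (u t) ≤ M)
    (hur : ∀ t ∈ Icc (0:ℝ) T, IsReal (u t)) (hξ : MemH (a:ℝ) ξ) (hU : IsLinSol ν u T ξ U)
    (hUc : ContH (a:ℝ) T U) (hUm : MemL2H ((a:ℝ) + 1) T U) :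
    hSq (a:ℝ) ξ ≤ (1 / T + (2 * ν + 2 * (K * M + 1).toReal)) *
      ∫ t in (0:ℝ)..T, hSq ((a:ℝ) + 1) (U t) := by
  set C := 2 * ν + 2 * (K * M + 1).toReal with hC
  have hC0 : 0 ≤ C := by positivity
  have hfin : ∀ t ∈ Icc (0:ℝ) T, FinH (a:ℝ) (U t) := by
    intro t ht
    rcases ht.1.eq_or_lt with h0 | h0
    · rw [← h0, hU.init]; exact hξ.2
    · exact (hUm.1 t ⟨h0, ht.2⟩).2.mono (by linarith)
  have hcont := coef_cont hUc hfin
  rw [intervalIntegral.integral_of_le hT.le]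
  set I := ∫ t in Ioc 0 T, hSq ((a:ℝ) + 1) (U t) with hI
  refine hξ.2.tsum_le_of_sum_le fun F => ?_
  change EF (a:ℝ) F ξ ≤ _
  have key : ∀ t ∈ Ioc (0:ℝ) T, EF (a:ℝ) F ξ ≤ hSq ((a:ℝ)+1) (U t) + C * I := by
    intro t ht
    have hsub : Ioc 0 t ⊆ Ioc 0 T := Ioc_subset_Ioc_right ht.2
    have hInt : IntegrableOn (fun τ => C * hSq ((a:ℝ)+1) (U τ)) (Ioc 0 T) := hUm.2.const_mul _
    have k1 := ftc_le (g := fun t => -EF (a:ℝ) F (U t)) (φ := fun τ => C * hSq ((a:ℝ)+1) (U τ))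
      ht.1.le ((EF_cont hcont (a:ℝ) F).neg.mono (Icc_subset_Icc_right ht.2))
      (fun x hx => (EF_deriv (fun k => hU.deriv k x ⟨hx.1, hx.2.le.trans ht.2⟩) (a:ℝ) F).neg)
      (hInt.mono_set hsub)
      (by
        filter_upwards [ae_restrict_mem measurableSet_Ioc] with x hx
        have hx' := hsub hx
        exact lin_deriv_bound hν hK hM (h _ _ (hur x (Ioc_subset_Icc_self hx')))
          (hu x (Ioc_subset_Icc_self hx')) (hUm.1 x hx').2 F)
    have k2 : ∫ τ in (0:ℝ)..t, C * hSq ((a:ℝ)+1) (U τ) ≤ C * I := by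
      rw [intervalIntegral.integral_of_le ht.1.le, hI, ← integral_const_mul]
      exact setIntegral_mono_set hInt
        (Filter.Eventually.of_forall fun τ => mul_nonneg hC0 (hSq_nonneg _ _))
        (Filter.Eventually.of_forall hsub)
    have k3 : EF (a:ℝ) F (U t) ≤ hSq ((a:ℝ)+1) (U t) :=
      (sum_le_hSq (hfin t (Ioc_subset_Icc_self ht)) F).trans
        (hSq_mono (by linarith) (hUm.1 t ht).2)
    simp only [hU.init] at k1
    linarith
  have avg : ∫ t in Ioc 0 T, EF (a:ℝ) F ξ ≤ ∫ t in Ioc 0 T, (hSq ((a:ℝ)+1) (U t) + C * I) := by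
    refine setIntegral_mono_on (integrableOn_const (by simp))
      (Integrable.add hUm.2 (integrableOn_const (by simp))) measurableSet_Ioc key
  rw [integral_add hUm.2 (integrableOn_const (by simp)), setIntegral_const, setIntegral_const,
    Real.volume_real_Ioc_of_le hT.le, sub_zero, smul_eq_mul, smul_eq_mul, ← hI] at avg
  have e : (1 / T + C) * I = (I + T * (C * I)) / T := by field_simp
  rw [e, le_div_iff₀ hT]
  linarith

end Lin

/-- Proposition `PropLinStab`. Stability estimate for the
linearised Navier–Stokes flow: for `a ∈ ℤ` with `a* = |a|+1` if `|a| ≤ 1` and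
`a* = |a|` if `|a| ≥ 2`, all `f ∈ Ḣ^{a*−1}_⋄` and `B > 0`, there exists
`C = C(ν,T,‖f‖_{Ḣ^{a*−1}},a,B) > 0` such that for all `θ ∈ Ḣ^{a*}_⋄` with
`‖θ‖_{Ḣ^{a*}} ≤ B` and all `ξ ∈ Ḣ^a_⋄`,
`‖ξ‖²_{Ḣ^a} ≤ C ∫₀ᵀ ‖𝕀_θ[ξ](t)‖²_{Ḣ^{a+1}} dt`. -/
theorem statement7 (a : ℤ) (T ν : ℝ) (hT : 0 < T) (hν : 0 < ν)
    (f : Coef) (hf : MemH ((astar a : ℝ) - 1) f) (B : ℝ) (hB : 0 < B) :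
    ∃ C : ℝ, 0 < C ∧
      ∀ (θ : Coef) (uθ : ℝ → Coef), MemH (astar a : ℝ) θ →
        hN (astar a : ℝ) θ ≤ B → IsNSSol ν f T θ uθ →
        ∀ (ξ : Coef) (U : ℝ → Coef), MemH (a : ℝ) ξ → IsLinSol ν uθ T ξ U →
          ContH (a : ℝ) T U → MemL2H ((a : ℝ) + 1) T U →
          hSq (a : ℝ) ξ ≤ C * ∫ t in (0:ℝ)..T, hSq ((a : ℝ) + 1) (U t) := by
  obtain ⟨K, hK, hKb⟩ := lin_bound a
  obtain ⟨M, hM, hMb⟩ := UB_int (B := B ^ 2) a hν hT.le hf.2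
  refine ⟨1 / T + (2 * ν + 2 * (K * M + 1).toReal), by positivity, ?_⟩
  intro θ u hθ hθB hsol ξ U hξ hU hUc hUm
  have hB2 : hSq (astar a : ℝ) θ ≤ B ^ 2 := by
    unfold hN at hθB
    exact (Real.sqrt_le_left hB.le).1 hθB
  exact lin_stab hT hν hK hM hKb (hMb θ u hθ.2 hB2 hsol).1 hsol.real hξ hU hUc hUm

end NS2D
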